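/- Assume neither p nor q is a root of unity. Then every K-algebra automorphism φ of the polynomial extension A_p(λ, μ, K_q[s,t])[w] satisfies φ(x) = α·x, φ(y) = α⁻¹·y, φ(s) = β·s, φ(t) = γ·t and φ(w) = a·w + b for some α, β, γ, a ∈ K^× and b ∈ K; in particular, every K-algebra automorphism of A_p(λ, μ, K_q[s,t])[w] is triangular. -/

import Mathlib

/-!
The proof realizes `B = A_p(λ, μ, K_q[s,t])[w]` inside a quantum torus. Put `z = 1 + (p - 1) y x`.
Then `x z = p z x`, `z` commutes with `s` and `t`, and after inverting `x` one has
`y = (p - 1)⁻¹ (z - 1) x⁻¹`. Hence `B` maps to the algebra with basis `z^i x^n s^k t^l`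
(exponents in `ℤ`) over `K[w]`, in which any two monomials commute up to a scalar. This algebra is
the space `Exps →₀ K[w]` with the twisted convolution product `WData.op`; the map is `WData.ev`
(`WData.ev_mul`), and it is injective because the monomials `y^j x^i s^k t^l` span `B` and have
distinct leading terms with respect to the exponent of `z` (`WData.ev_injective`).

The image satisfies two constraints (`WData.good_ev`): the exponents of `z`, `s`, `t` are
nonnegative, and for `n < 0` the coefficient of `x^n s^k t^l`, a polynomial in `z`, vanishes
at `z = 1`.

A normal element `N` conjugates every monomial of the torus by a scalar (`tw_conj`), and since `p`
and `q` are not roots of unity these scalars separate monomials, so `N` is a single term; the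
constraints force it to be `c z^i s^k t^l` with `c ∈ K[w]` (`WData.nrm_classify`). In
particular the center is `K[w]`, so an automorphism `φ` restricts to `K[w]` and `φ(w) = a w + b`.

The elements `z`, `s`, `t` are normal and not central, so `φ` and `φ⁻¹` send them to normal monomials
of degree at least one in `z`, `s`, `t`; composing `φ` with `φ⁻¹` shows that the degree is exactly
one (`WData.map_deg_one`). The commutation relations among `z`, `s`, `t` then leave only
`φ(z) = β₀ z`, `φ(s) = β s`, `φ(t) = γ t` with nonzero scalars (`WData.map_zst'`).

From `φ(x) z = p z φ(x)` it follows that `φ(x)` has degree one in `x`, so `x` divides `φ(x)` on the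
left. Applying `φ⁻¹` writes `x` as a product with factor `φ⁻¹(x)`, and factors of a monomial are
monomials (`tw_factor`), so `φ⁻¹(x)`, and by symmetry `φ(x)`, is a scalar multiple of `x`. Finally
`φ(y) x` is a multiple of `β₀ z - 1`, and the constraint at `z = 1` forces `β₀ = 1`, which gives
`φ(y) = α⁻¹ y` (`WData.map_by`). Thus `φ` preserves `A`.
-/

noncomputable section

open FreeAlgebra Polynomial

/-- Relations of the extended quantized Weyl algebra `A_p(lam, mu, K_q[s,t])`. -/
inductive ExtWeylRel (K : Type*) [Field K] (p q lam mu : K) :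
    FreeAlgebra K (Fin 4) → FreeAlgebra K (Fin 4) → Prop
  | weyl : ExtWeylRel K p q lam mu (ι K (0 : Fin 4) * ι K 1 - p • (ι K 1 * ι K 0)) 1
  | st : ExtWeylRel K p q lam mu (ι K (2 : Fin 4) * ι K 3) (q • (ι K 3 * ι K 2))
  | sx : ExtWeylRel K p q lam mu (ι K (2 : Fin 4) * ι K 0) (lam • (ι K 0 * ι K 2))
  | sy : ExtWeylRel K p q lam mu (ι K (2 : Fin 4) * ι K 1) (lam⁻¹ • (ι K 1 * ι K 2))
  | tx : ExtWeylRel K p q lam mu (ι K (3 : Fin 4) * ι K 0) (mu • (ι K 0 * ι K 3))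
  | ty : ExtWeylRel K p q lam mu (ι K (3 : Fin 4) * ι K 1) (mu⁻¹ • (ι K 1 * ι K 3))

/-- The extended quantized Weyl algebra `A_p(lam, mu, K_q[s,t])`. -/
abbrev ExtWeyl (K : Type*) [Field K] (p q lam mu : K) : Type _ :=
  RingQuot (ExtWeylRel K p q lam mu)

variable (K : Type*) [Field K] (p q lam mu : K)

/-- The generator `x`. -/
def wx : ExtWeyl K p q lam mu := RingQuot.mkAlgHom K _ (ι K 0)
/-- The generator `y`. -/
def wy : ExtWeyl K p q lam mu := RingQuot.mkAlgHom K _ (ι K 1)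
/-- The generator `s`. -/
def ws : ExtWeyl K p q lam mu := RingQuot.mkAlgHom K _ (ι K 2)
/-- The generator `t`. -/
def wt : ExtWeyl K p q lam mu := RingQuot.mkAlgHom K _ (ι K 3)

/-! ### Twisted group algebras of ordered groups -/

lemma neg_hom_injective {M Γ : Type*} [AddCommGroup M] [AddCommGroup Γ] {f : M →+ Γ}
    (hf : Function.Injective f) :
    Function.Injective (-f : M →+ Γ) := by
  intro a b h
  simp only [AddMonoidHom.neg_apply, neg_inj] at h
  exact hf h

section Twisted

variable {R : Type*} [CommRing R] {M : Type*} [AddCommGroup M] (c : M → M → Rˣ)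

/-- Twisted convolution on `M →₀ R`: the bilinear product with `g * h = c g h • (g + h)` on basis
elements. No cocycle condition is imposed on `c` here; it is a hypothesis of `tw_assoc`. -/
def tw : (M →₀ R) →ₗ[R] (M →₀ R) →ₗ[R] (M →₀ R) :=
  Finsupp.linearCombination R fun g =>
    Finsupp.linearCombination R fun h => Finsupp.single (g + h) (c g h : R)

lemma tw_single_single (g h : M) (a b : R) :
    tw c (Finsupp.single g a) (Finsupp.single h b) =
      Finsupp.single (g + h) (a * b * (c g h : R)) := by
  simp [tw, Finsupp.smul_single, -Finsupp.single_mul, mul_assoc]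

lemma tw_eq_sum (u v : M →₀ R) :
    tw c u v = ∑ g ∈ u.support, ∑ h ∈ v.support,
      Finsupp.single (g + h) (u g * v h * (c g h : R)) := by
  conv_lhs => rw [← Finsupp.sum_single u, ← Finsupp.sum_single v]
  simp only [Finsupp.sum, map_sum, LinearMap.sum_apply, tw_single_single]
  rw [Finset.sum_comm]

lemma tw_assoc (hc : ∀ g h k, c g h * c (g + h) k = c h k * c g (h + k)) (u v w : M →₀ R) :
    tw c (tw c u v) w = tw c u (tw c v w) := by
  induction u using Finsupp.induction_linear with
  | zero => simp
  | add u u' h h' => simp [h, h']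
  | single g a =>
    induction v using Finsupp.induction_linear with
    | zero => simp
    | add u u' h h' => simp [h, h']
    | single h b =>
      induction w using Finsupp.induction_linear with
      | zero => simp
      | add u u' h h' => simp [h, h']
      | single k d =>
        simp only [tw_single_single, add_assoc]
        congr 1
        have := congrArg (Units.val) (hc g h k)
        simp only [Units.val_mul] at this
        linear_combination (a * b * d) * this

lemma tw_single_left_apply (m : M) (a : R) (v : M →₀ R) (g : M) :
    tw c (Finsupp.single m a) v (m + g) = a * v g * (c m g : R) := by
  classical
  induction v using Finsupp.induction_linear with
  | zero => simp
  | add u u' h h' => simp [h, h']; ring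
  | single k d =>
    rw [tw_single_single, Finsupp.single_apply, Finsupp.single_apply]
    by_cases h : k = g <;> simp [h]

lemma tw_single_right_apply (m : M) (a : R) (v : M →₀ R) (g : M) :
    tw c v (Finsupp.single m a) (g + m) = v g * a * (c g m : R) := by
  classical
  induction v using Finsupp.induction_linear with
  | zero => simp
  | add u u' h h' => simp [h, h']; ring
  | single k d =>
    rw [tw_single_single, Finsupp.single_apply, Finsupp.single_apply]
    by_cases h : k = g <;> simp [h]

variable [IsDomain R]

lemma tw_single_left_injective (m : M) {a : R} (ha : a ≠ 0) :
    Function.Injective (tw c (Finsupp.single m a)) := by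
  intro v w h
  ext g
  have := DFunLike.congr_fun h (m + g)
  rw [tw_single_left_apply, tw_single_left_apply] at this
  exact mul_left_cancel₀ ha (mul_right_cancel₀ (c m g).ne_zero this)

variable {Γ : Type*} [AddCommGroup Γ] [LinearOrder Γ] [IsOrderedAddMonoid Γ]

/-- If `M` embeds into a linearly ordered group, the leading terms of two nonzero elements multiply
to a nonzero term of the product. -/
lemma tw_leading (f : M →+ Γ) (hf : Function.Injective f) {u v : M →₀ R}
    (hu : u ≠ 0) (hv : v ≠ 0) :
    ∃ α ∈ u.support, ∃ γ ∈ v.support, (∀ β ∈ u.support, f β ≤ f α) ∧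
      (∀ β ∈ v.support, f β ≤ f γ) ∧ α + γ ∈ (tw c u v).support := by
  obtain ⟨α, hα, hα'⟩ := u.support.exists_max_image f (Finsupp.support_nonempty_iff.2 hu)
  obtain ⟨γ, hγ, hγ'⟩ := v.support.exists_max_image f (Finsupp.support_nonempty_iff.2 hv)
  refine ⟨α, hα, γ, hγ, hα', hγ', ?_⟩
  have key : tw c u v (α + γ) = u α * v γ * (c α γ : R) := by
    classical
    rw [tw_eq_sum]
    simp only [Finsupp.finsetSum_apply]
    have aux : ∀ g ∈ u.support, ∀ h ∈ v.support, g + h = α + γ → g = α ∧ h = γ := by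
      intro g hg h hh e
      have e' : f g + f h = f α + f γ := by rw [← map_add, e, map_add]
      have h1 := hα' g hg
      have h2 := hγ' h hh
      have h3 : f g = f α := by
        by_contra hne
        exact absurd e' (add_lt_add_of_lt_of_le (lt_of_le_of_ne h1 hne) h2).ne
      have h4 := hf h3
      subst h4
      exact ⟨rfl, add_left_cancel e⟩
    rw [Finset.sum_eq_single α, Finset.sum_eq_single γ]
    · simp
    · intro h hh hne
      rw [Finsupp.single_apply, if_neg]
      intro e
      exact hne (aux α hα h hh e).2
    · intro h; exact absurd hγ h
    · intro g hg hne
      refine Finset.sum_eq_zero fun h hh => ?_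
      rw [Finsupp.single_apply, if_neg]
      intro e
      exact hne (aux g hg h hh e).1
    · intro h; exact absurd hα h
  rw [Finsupp.mem_support_iff, key]
  exact mul_ne_zero (mul_ne_zero (Finsupp.mem_support_iff.1 hα) (Finsupp.mem_support_iff.1 hγ))
    (c α γ).ne_zero

lemma tw_ne_zero (f : M →+ Γ) (hf : Function.Injective f) {u v : M →₀ R}
    (hu : u ≠ 0) (hv : v ≠ 0) : tw c u v ≠ 0 := by
  obtain ⟨α, -, γ, -, -, -, h⟩ := tw_leading c f hf hu hv
  intro h0
  simp [h0] at h

/-- If `e_m v = v u`, comparing leading terms bounds the support of `u` by `m`. -/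
lemma tw_conj_le (f : M →+ Γ) (hf : Function.Injective f) {u v : M →₀ R} {m : M}
    (hv : v ≠ 0) (h : tw c (Finsupp.single m 1) v = tw c v u) :
    ∀ β ∈ u.support, f β ≤ f m := by
  intro β hβ
  have hu : u ≠ 0 := by rintro rfl; simp at hβ
  obtain ⟨α, hα, γ, hγ, h1, h2, h3⟩ := tw_leading c f hf hv hu
  rw [← h] at h3
  have e : α + γ = m + (α + γ - m) := by abel
  rw [Finsupp.mem_support_iff, e, tw_single_left_apply] at h3
  have h4 : α + γ - m ∈ v.support := by
    rw [Finsupp.mem_support_iff]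
    intro h0
    simp [h0] at h3
  have h5 := h1 _ h4
  rw [map_sub, map_add, add_sub_assoc, add_le_iff_nonpos_right, sub_nonpos] at h5
  exact (h2 β hβ).trans h5

/-- If `e_m v = v u`, then `u` is concentrated at `m` (`tw_conj_le` for the order and for its
opposite), so every `g` in the support of `v` commutes with `m` up to the same factor `u m`. -/
lemma tw_conj (f : M →+ Γ) (hf : Function.Injective f) {u v : M →₀ R} {m : M}
    (hv : v ≠ 0) (h : tw c (Finsupp.single m 1) v = tw c v u) {g : M} (hg : g ∈ v.support) :
    (c m g : R) = u m * (c g m : R) := by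
  classical
  have hu : u = Finsupp.single m (u m) := by
    ext β
    rw [Finsupp.single_apply]
    split_ifs with hβ
    · rw [hβ]
    · by_contra hne
      have hβ' := Finsupp.mem_support_iff.2 hne
      have h1 := tw_conj_le c f hf hv h β hβ'
      have h2 := tw_conj_le c (-f) (neg_hom_injective hf) hv h β hβ'
      simp only [AddMonoidHom.neg_apply, neg_le_neg_iff] at h2
      exact hβ (hf (le_antisymm h2 h1))
  have h' := DFunLike.congr_fun h (m + g)
  rw [hu, tw_single_left_apply, add_comm m g, tw_single_right_apply] at h'
  refine mul_left_cancel₀ (Finsupp.mem_support_iff.1 hg) ?_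
  linear_combination h'

/-- Factors of a monomial are monomials: the largest and the smallest term of each factor
coincide. -/
lemma tw_factor (f : M →+ Γ) (hf : Function.Injective f) {u v : M →₀ R} {m : M} {a : R}
    (ha : a ≠ 0) (h : tw c u v = Finsupp.single m a) :
    ∃ g h b d, u = Finsupp.single g b ∧ v = Finsupp.single h d ∧ g + h = m ∧ b ≠ 0 ∧ d ≠ 0 := by
  classical
  have hu : u ≠ 0 := by
    rintro rfl
    simp [eq_comm, ha] at h
  have hv : v ≠ 0 := by
    rintro rfl
    simp [eq_comm, ha] at h
  obtain ⟨α, hα, γ, hγ, h1, h2, h3⟩ := tw_leading c f hf hu hv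
  obtain ⟨α', hα', γ', hγ', h1', h2', h3'⟩ := tw_leading c (-f) (neg_hom_injective hf) hu hv
  simp only [h, Finsupp.support_single _ ha, Finset.mem_singleton] at h3 h3'
  simp only [AddMonoidHom.neg_apply, neg_le_neg_iff] at h1' h2'
  have e : f α + f γ = f α' + f γ' := by rw [← map_add, ← map_add, h3, h3']
  have i1 := h1' α hα
  have i2 := h2' γ hγ
  have e1 : f α' = f α := by
    by_contra hne
    exact absurd e (add_lt_add_of_lt_of_le (lt_of_le_of_ne i1 hne) i2).ne'
  have e2 : f γ' = f γ := by
    rw [e1] at e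
    exact (add_left_cancel e).symm
  refine ⟨α, γ, u α, v γ, ?_, ?_, h3, Finsupp.mem_support_iff.1 hα, Finsupp.mem_support_iff.1 hγ⟩
  · ext β
    rw [Finsupp.single_apply]
    split_ifs with hβ
    · rw [hβ]
    · by_contra hne
      have hβ' := Finsupp.mem_support_iff.2 hne
      exact hβ (hf (le_antisymm (e1 ▸ h1' β hβ') (h1 β hβ')))
  · ext β
    rw [Finsupp.single_apply]
    split_ifs with hβ
    · rw [hβ]
    · by_contra hne
      have hβ' := Finsupp.mem_support_iff.2 hne
      exact hβ (hf (le_antisymm (e2 ▸ h2' β hβ') (h2 β hβ')))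

end Twisted

/-! ### The quantum torus -/

/-- The parameters `p, q, λ, μ` as units of `K`, with `p` and `q` not roots of unity. -/
structure WData (K : Type*) [Field K] where
  /-- the parameter `p` -/
  P : Kˣ
  /-- the parameter `q` -/
  Q : Kˣ
  /-- the parameter `λ` -/
  L : Kˣ
  /-- the parameter `μ` -/
  U : Kˣ
  hP : ∀ n : ℤ, P ^ n = 1 → n = 0
  hQ : ∀ n : ℤ, Q ^ n = 1 → n = 0

/-- Exponents `(i, n, k, l)` of the Laurent monomials `z^i x^n s^k t^l`. -/
abbrev Exps : Type := ℤ × ℤ × ℤ × ℤ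

/-- The embedding of the exponents into `ℤ⁴` with the lexicographic order. -/
def expsLex : Exps →+ (ℤ ×ₗ ℤ ×ₗ ℤ ×ₗ ℤ) where
  toFun g := toLex (g.1, toLex (g.2.1, toLex (g.2.2.1, g.2.2.2)))
  map_zero' := rfl
  map_add' _ _ := rfl

lemma expsLex_injective : Function.Injective expsLex := by
  rintro ⟨a, b, c, d⟩ ⟨a', b', c', d'⟩ h
  simpa [expsLex] using h

namespace WData

section

variable {K : Type*} [Field K] (D : WData K)

/-- The extended quantized Weyl algebra with the parameters `D`. -/
abbrev A : Type _ := ExtWeyl K (D.P : K) (D.Q : K) (D.L : K) (D.U : K)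

/-- The scalar by which `z^g.1 x^g.2.1 s^g.2.2.1 t^g.2.2.2` times the monomial with exponent `h`
differs from the monomial with exponent `g + h`: moving `x`, `s`, `t` past `z`, `x`, `s` uses
`x z = p z x`, `s x = λ x s`, `t x = μ x t` and `t s = q⁻¹ s t`. -/
def cocK (g h : Exps) : Kˣ :=
  D.P ^ (g.2.1 * h.1) * D.L ^ (g.2.2.1 * h.2.1) * D.U ^ (g.2.2.2 * h.2.1) *
    D.Q ^ (-(g.2.2.2 * h.2.2.1))

/-- The cocycle `cocK` with values in the units of `K[w]`. -/
def coc (g h : Exps) : K[X]ˣ := Units.map (C : K →+* K[X]) (D.cocK g h)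

lemma coc_val (g h : Exps) : (D.coc g h : K[X]) = C (D.cocK g h : K) := rfl

lemma cocK_assoc (g h k : Exps) :
    D.cocK g h * D.cocK (g + h) k = D.cocK h k * D.cocK g (h + k) := by
  simp only [cocK, Prod.fst_add, Prod.snd_add, add_mul, mul_add, neg_add, zpow_add]
  ext
  push_cast
  ring

lemma coc_assoc (g h k : Exps) :
    D.coc g h * D.coc (g + h) k = D.coc h k * D.coc g (h + k) := by
  simp only [coc, ← map_mul, cocK_assoc]

@[simp] lemma cocK_zero_left (h : Exps) : D.cocK 0 h = 1 := by simp [cocK]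
@[simp] lemma cocK_zero_right (h : Exps) : D.cocK h 0 = 1 := by simp [cocK]

/-- The product of the quantum torus over `K[w]`, as left multiplication operators. -/
abbrev op : (Exps →₀ K[X]) →ₗ[K[X]] Module.End K[X] (Exps →₀ K[X]) := tw D.coc

lemma op_single (g h : Exps) (a b : K[X]) :
    D.op (Finsupp.single g a) (Finsupp.single h b) =
      Finsupp.single (g + h) (a * b * C (D.cocK g h : K)) :=
  tw_single_single _ _ _ _ _

lemma op_mul (u v : Exps →₀ K[X]) : D.op u * D.op v = D.op (D.op u v) := by
  refine LinearMap.ext fun w => ?_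
  exact (tw_assoc _ D.coc_assoc _ _ _).symm

/-- The unit of the quantum torus. -/
abbrev e0 : Exps →₀ K[X] := Finsupp.single 0 1

lemma op_one : D.op e0 = 1 := by
  ext g : 2
  simp [tw_single_single, coc_val]

lemma op_e0 (v : Exps →₀ K[X]) : D.op v e0 = v := by
  induction v using Finsupp.induction_linear with
  | zero => simp
  | add u u' h h' => simp [h, h']
  | single g a => simp [tw_single_single, coc_val]

lemma P_sub_one_ne : (D.P : K) - 1 ≠ 0 := by
  intro h
  have : D.P ^ (1 : ℤ) = 1 := by ext; simpa using sub_eq_zero.1 h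
  simpa using D.hP 1 this

/-- The image of `x` in the quantum torus. -/
def vx : Exps →₀ K[X] := Finsupp.single (0, 1, 0, 0) 1
/-- The image `(p - 1)⁻¹ (z - 1) x⁻¹` of `y` in the quantum torus. -/
def vy : Exps →₀ K[X] := Finsupp.single (1, -1, 0, 0) (C ((D.P : K) - 1)⁻¹) -
  Finsupp.single (0, -1, 0, 0) (C ((D.P : K) - 1)⁻¹)
/-- The image of `s` in the quantum torus. -/
def vs : Exps →₀ K[X] := Finsupp.single (0, 0, 1, 0) 1
/-- The image of `t` in the quantum torus. -/
def vt : Exps →₀ K[X] := Finsupp.single (0, 0, 0, 1) 1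
/-- The image of `z` in the quantum torus. -/
def vz : Exps →₀ K[X] := Finsupp.single (1, 0, 0, 0) 1

lemma smul_eq_C (r : K) (f : Module.End K[X] (Exps →₀ K[X])) : r • f = (C r : K[X]) • f := by
  ext : 3
  simp [Polynomial.smul_eq_C_mul]

lemma smul_eq_C' (r : K) (f : (Exps →₀ K[X])) : r • f = (C r : K[X]) • f := by
  ext : 3
  simp

lemma op_vx_vy : D.op vx D.vy = Finsupp.single (1, 0, 0, 0) (C (((D.P : K) - 1)⁻¹ * D.P)) -
    Finsupp.single 0 (C ((D.P : K) - 1)⁻¹) := by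
  rw [vx, vy, map_sub, op_single, op_single, one_mul, ← C_mul, ← C_mul]
  simp [cocK, -map_mul, -map_inv₀]
  rfl

lemma op_vy_vx : D.op D.vy vx = Finsupp.single (1, 0, 0, 0) (C ((D.P : K) - 1)⁻¹) -
    Finsupp.single 0 (C ((D.P : K) - 1)⁻¹) := by
  rw [vx, vy, map_sub, LinearMap.sub_apply, op_single, op_single, mul_one, ← C_mul, ← C_mul]
  simp [cocK, -map_mul, -map_inv₀]
  rfl

/-- The free algebra acting on the quantum torus by left multiplication with the images of the
generators. -/
def repFree : FreeAlgebra K (Fin 4) →ₐ[K] Module.End K[X] (Exps →₀ K[X]) :=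
  FreeAlgebra.lift K ![D.op vx, D.op D.vy, D.op vs, D.op vt]

lemma repFree_rel ⦃a b : FreeAlgebra K (Fin 4)⦄
    (h : ExtWeylRel K (D.P : K) (D.Q : K) (D.L : K) (D.U : K) a b) :
    D.repFree a = D.repFree b := by
  have hp := D.P_sub_one_ne
  cases h
  · simp only [repFree, map_sub, map_mul, map_smul, map_one, FreeAlgebra.lift_ι_apply,
      Matrix.cons_val, op_mul, smul_eq_C]
    rw [← map_smul, ← map_sub, ← D.op_one]
    congr 1
    rw [op_vx_vy, op_vy_vx, smul_sub, Finsupp.smul_single, Finsupp.smul_single, smul_eq_mul,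
      ← C_mul, mul_comm (D.P : K), sub_sub_sub_cancel_left, ← Finsupp.single_sub, ← C_sub]
    congr 1
    rw [← C_1]
    congr 1
    field_simp
  · simp only [repFree, map_mul, map_smul, FreeAlgebra.lift_ι_apply,
      Matrix.cons_val, op_mul, smul_eq_C]
    rw [← map_smul]
    congr 1
    rw [vs, vt, op_single, op_single, Finsupp.smul_single]
    simp [cocK, -map_mul, -map_inv₀, ← C_mul]
  · simp only [repFree, map_mul, map_smul, FreeAlgebra.lift_ι_apply,
      Matrix.cons_val, op_mul, smul_eq_C]
    rw [← map_smul]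
    congr 1
    rw [vs, vx, op_single, op_single, Finsupp.smul_single]
    simp [cocK]
  · simp only [repFree, map_mul, map_smul, FreeAlgebra.lift_ι_apply,
      Matrix.cons_val, op_mul, smul_eq_C]
    rw [← map_smul]
    congr 1
    rw [vs, vy, map_sub, map_sub, LinearMap.sub_apply, smul_sub]
    simp only [op_single, Finsupp.smul_single, smul_eq_mul]
    simp [cocK, -map_mul, -map_inv₀, mul_comm]
  · simp only [repFree, map_mul, map_smul, FreeAlgebra.lift_ι_apply,
      Matrix.cons_val, op_mul, smul_eq_C]
    rw [← map_smul]
    congr 1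
    rw [vt, vx, op_single, op_single, Finsupp.smul_single]
    simp [cocK]
  · simp only [repFree, map_mul, map_smul, FreeAlgebra.lift_ι_apply,
      Matrix.cons_val, op_mul, smul_eq_C]
    rw [← map_smul]
    congr 1
    rw [vt, vy, map_sub, map_sub, LinearMap.sub_apply, smul_sub]
    simp only [op_single, Finsupp.smul_single, smul_eq_mul]
    simp [cocK, -map_mul, -map_inv₀, mul_comm]

/-! ### The algebra `B` and its map to the quantum torus -/

/-- The polynomial extension `A[w]`. -/
abbrev B : Type _ := Polynomial D.A

/-- The generator `x` in `B`. -/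
def bx : D.B := C (wx K (D.P : K) (D.Q : K) (D.L : K) (D.U : K))
/-- The generator `y` in `B`. -/
def by' : D.B := C (wy K (D.P : K) (D.Q : K) (D.L : K) (D.U : K))
/-- The generator `s` in `B`. -/
def bs : D.B := C (ws K (D.P : K) (D.Q : K) (D.L : K) (D.U : K))
/-- The generator `t` in `B`. -/
def bt : D.B := C (wt K (D.P : K) (D.Q : K) (D.L : K) (D.U : K))
/-- The normal element `z = 1 + (p - 1) y x` of `B`. -/
def bz : D.B := 1 + ((D.P : K) - 1) • (D.by' * D.bx)
/-- The embedding of `K[w]` into `B`. -/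
def iota : K[X] →+* D.B := Polynomial.mapRingHom (algebraMap K D.A)

lemma iota_X : D.iota X = X := by simp [iota]
lemma iota_C (a : K) : D.iota (C a) = algebraMap K D.B a := by
  simp [iota, Polynomial.algebraMap_apply]

lemma rel_xy : D.bx * D.by' = (D.P : K) • (D.by' * D.bx) + 1 := by
  have := RingQuot.mkAlgHom_rel K (ExtWeylRel.weyl (K := K) (p := D.P) (q := D.Q)
    (lam := D.L) (mu := D.U))
  rw [map_sub, sub_eq_iff_eq_add, map_smul, map_mul, map_mul, map_one] at this
  simp only [bx, by', ← C_mul, smul_C, ← C_add, ← C_1, wx, wy]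
  rw [this, add_comm]

lemma rel_st : D.bs * D.bt = (D.Q : K) • (D.bt * D.bs) := by
  have := RingQuot.mkAlgHom_rel K (ExtWeylRel.st (K := K) (p := D.P) (q := D.Q)
    (lam := D.L) (mu := D.U))
  rw [map_smul, map_mul, map_mul] at this
  simp only [bs, bt, ← C_mul, smul_C, wt, ws]
  rw [this]

lemma rel_sx : D.bs * D.bx = (D.L : K) • (D.bx * D.bs) := by
  have := RingQuot.mkAlgHom_rel K (ExtWeylRel.sx (K := K) (p := D.P) (q := D.Q)
    (lam := D.L) (mu := D.U))
  rw [map_smul, map_mul, map_mul] at this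
  simp only [bs, bx, ← C_mul, smul_C, wx, ws]
  rw [this]

lemma rel_sy : D.bs * D.by' = (D.L : K)⁻¹ • (D.by' * D.bs) := by
  have := RingQuot.mkAlgHom_rel K (ExtWeylRel.sy (K := K) (p := D.P) (q := D.Q)
    (lam := D.L) (mu := D.U))
  rw [map_smul, map_mul, map_mul] at this
  simp only [bs, by', ← C_mul, smul_C, wy, ws]
  rw [this]

lemma rel_tx : D.bt * D.bx = (D.U : K) • (D.bx * D.bt) := by
  have := RingQuot.mkAlgHom_rel K (ExtWeylRel.tx (K := K) (p := D.P) (q := D.Q)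
    (lam := D.L) (mu := D.U))
  rw [map_smul, map_mul, map_mul] at this
  simp only [bt, bx, ← C_mul, smul_C, wx, wt]
  rw [this]

lemma rel_ty : D.bt * D.by' = (D.U : K)⁻¹ • (D.by' * D.bt) := by
  have := RingQuot.mkAlgHom_rel K (ExtWeylRel.ty (K := K) (p := D.P) (q := D.Q)
    (lam := D.L) (mu := D.U))
  rw [map_smul, map_mul, map_mul] at this
  simp only [bt, by', ← C_mul, smul_C, wy, wt]
  rw [this]

variable {D} in
/-- `A` is generated by `x, y, s, t`. -/
lemma subalgebra_A_eq_top {S : Subalgebra K D.A}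
    (hx : wx K (D.P : K) (D.Q : K) (D.L : K) (D.U : K) ∈ S)
    (hy : wy K (D.P : K) (D.Q : K) (D.L : K) (D.U : K) ∈ S)
    (hs : ws K (D.P : K) (D.Q : K) (D.L : K) (D.U : K) ∈ S)
    (ht : wt K (D.P : K) (D.Q : K) (D.L : K) (D.U : K) ∈ S) (a : D.A) : a ∈ S := by
  obtain ⟨f, rfl⟩ := RingQuot.mkAlgHom_surjective K _ a
  induction f using FreeAlgebra.induction with
  | grade0 r => rw [AlgHom.commutes]; exact S.algebraMap_mem r
  | grade1 i =>
    fin_cases i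
    · exact hx
    · exact hy
    · exact hs
    · exact ht
  | mul a b ha hb => rw [map_mul]; exact S.mul_mem ha hb
  | add a b ha hb => rw [map_add]; exact S.add_mem ha hb

variable {D} in
/-- `B` is generated by `x, y, s, t, w`. -/
lemma subalgebra_B_eq_top {S : Subalgebra K D.B} (hx : D.bx ∈ S) (hy : D.by' ∈ S)
    (hs : D.bs ∈ S) (ht : D.bt ∈ S) (hw : (X : D.B) ∈ S) (b : D.B) : b ∈ S := by
  have hC : ∀ a : D.A, (C a : D.B) ∈ S := fun a =>
    subalgebra_A_eq_top (S := S.comap (Polynomial.CAlgHom : D.A →ₐ[K] D.B)) hx hy hs ht a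
  induction b using Polynomial.induction_on' with
  | add p q hp hq => exact S.add_mem hp hq
  | monomial n a =>
    rw [← C_mul_X_pow_eq_monomial]
    exact S.mul_mem (hC a) (S.pow_mem hw n)

lemma iota_comm (f : K[X]) (b : D.B) : D.iota f * b = b * D.iota f := by
  induction f using Polynomial.induction_on' with
  | add p q hp hq => rw [map_add, add_mul, mul_add, hp, hq]
  | monomial n a =>
    rw [← C_mul_X_pow_eq_monomial, map_mul, map_pow, iota_X, iota_C]
    rw [mul_assoc, X_pow_mul, ← mul_assoc, Algebra.commutes, mul_assoc]

/-- The action of `A` on the quantum torus by left multiplication. -/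
def repA : D.A →ₐ[K] Module.End K[X] (Exps →₀ K[X]) :=
  RingQuot.liftAlgHom K ⟨D.repFree, D.repFree_rel⟩

/-- The action of `B` on the quantum torus, with `w` acting as the scalar `w ∈ K[w]`. -/
def rep : D.B →ₐ[K] Module.End K[X] (Exps →₀ K[X]) :=
  Polynomial.eval₂AlgHom D.repA (algebraMap K[X] _ X) fun _ =>
    (Algebra.commutes _ _).symm

lemma rep_C (a : D.A) : D.rep (C a) = D.repA a := eval₂_C _ _
lemma rep_X : D.rep X = algebraMap K[X] _ X := eval₂_X _ _
lemma rep_bx : D.rep D.bx = D.op vx := by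
  rw [bx, rep_C, wx, repA, RingQuot.liftAlgHom_mkAlgHom_apply]; simp [repFree]
lemma rep_by : D.rep D.by' = D.op D.vy := by
  rw [by', rep_C, wy, repA, RingQuot.liftAlgHom_mkAlgHom_apply]; simp [repFree]
lemma rep_bs : D.rep D.bs = D.op vs := by
  rw [bs, rep_C, ws, repA, RingQuot.liftAlgHom_mkAlgHom_apply]; simp [repFree]
lemma rep_bt : D.rep D.bt = D.op vt := by
  rw [bt, rep_C, wt, repA, RingQuot.liftAlgHom_mkAlgHom_apply]; simp [repFree]

lemma rep_iota (f : K[X]) : D.rep (D.iota f) = algebraMap K[X] _ f := by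
  induction f using Polynomial.induction_on' with
  | add p q hp hq => rw [map_add, map_add, map_add, hp, hq]
  | monomial n a =>
    rw [← C_mul_X_pow_eq_monomial, map_mul, map_pow, iota_X, iota_C, map_mul, map_pow, rep_X,
      map_mul, map_pow, AlgHom.commutes]
    congr 1
    rw [Algebra.algebraMap_eq_smul_one, Algebra.algebraMap_eq_smul_one, smul_eq_C]

/-- The image of `b` in the quantum torus, obtained by letting `b` act on the unit. It is
multiplicative by `ev_mul`. -/
def ev : D.B →ₗ[K] (Exps →₀ K[X]) where
  toFun b := D.rep b e0
  map_add' := by simp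
  map_smul' := by simp

lemma op_smul_one (f : K[X]) : D.op (Finsupp.single 0 f) = algebraMap K[X] _ f := by
  rw [Algebra.algebraMap_eq_smul_one, ← op_one, ← map_smul, Finsupp.smul_single, smul_eq_mul,
    mul_one]

/-- `B` acts on the quantum torus through left multiplications. -/
lemma rep_eq (b : D.B) : D.rep b = D.op (D.ev b) := by
  suffices h : ∃ v, D.rep b = D.op v by
    obtain ⟨v, hv⟩ := h
    rw [hv]
    congr 1
    change v = D.rep b e0
    rw [hv, op_e0]
  let S : Subalgebra K D.B :=
    { carrier := {b | ∃ v, D.rep b = D.op v}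
      mul_mem' := by
        rintro a b ⟨u, hu⟩ ⟨v, hv⟩
        exact ⟨D.op u v, by rw [map_mul, hu, hv, op_mul]⟩
      add_mem' := by
        rintro a b ⟨u, hu⟩ ⟨v, hv⟩
        exact ⟨u + v, by rw [map_add, hu, hv, map_add]⟩
      algebraMap_mem' := fun r => ⟨Finsupp.single 0 (C r), by
        rw [← iota_C, rep_iota, op_smul_one]⟩ }
  exact subalgebra_B_eq_top (S := S) ⟨_, D.rep_bx⟩ ⟨_, D.rep_by⟩ ⟨_, D.rep_bs⟩ ⟨_, D.rep_bt⟩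
    ⟨Finsupp.single 0 X, by rw [rep_X, op_smul_one]⟩ b

lemma ev_mul (a b : D.B) : D.ev (a * b) = D.op (D.ev a) (D.ev b) := by
  rw [← rep_eq]
  simp [ev]

lemma ev_of_rep {b : D.B} {v : Exps →₀ K[X]} (h : D.rep b = D.op v) : D.ev b = v := by
  change D.rep b e0 = v
  rw [h, op_e0]

lemma ev_bx : D.ev D.bx = vx := D.ev_of_rep D.rep_bx
lemma ev_by : D.ev D.by' = D.vy := D.ev_of_rep D.rep_by
lemma ev_bs : D.ev D.bs = vs := D.ev_of_rep D.rep_bs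
lemma ev_bt : D.ev D.bt = vt := D.ev_of_rep D.rep_bt
lemma ev_iota (f : K[X]) : D.ev (D.iota f) = Finsupp.single 0 f :=
  D.ev_of_rep (by rw [rep_iota, op_smul_one])
lemma ev_one : D.ev 1 = e0 := by
  have := D.ev_iota 1
  rwa [map_one] at this

lemma ev_bz : D.ev D.bz = vz := by
  rw [bz, map_add, map_smul, ev_mul, ev_by, ev_bx, ev_one, op_vy_vx, smul_eq_C', smul_sub,
    Finsupp.smul_single, Finsupp.smul_single, smul_eq_mul, ← C_mul,
    mul_inv_cancel₀ D.P_sub_one_ne, C_1, vz]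
  abel

lemma ev_iota_mul (f : K[X]) (b : D.B) : D.ev (D.iota f * b) = f • D.ev b := by
  rw [ev_mul, ev_iota, op_smul_one]
  rfl

end
end WData

/-! ### The PBW spanning set and injectivity of `ev` -/

lemma qcomm_pow {K B : Type*} [Field K] [Ring B] [Algebra K B] {u v : B} {a : K}
    (h : u * v = a • (v * u)) (j : ℕ) : u * v ^ j = a ^ j • (v ^ j * u) := by
  induction j with
  | zero => simp
  | succ j ih =>
    rw [pow_succ, ← mul_assoc, ih, smul_mul_assoc, mul_assoc, h, mul_smul_comm, smul_smul,
      mul_assoc, pow_succ a]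

lemma qcomm_pow_mul {K B : Type*} [Field K] [Ring B] [Algebra K B] {u v : B} {a : K}
    (h : u * v = a • (v * u)) (j : ℕ) (m : B) : u * (v ^ j * m) = a ^ j • (v ^ j * (u * m)) := by
  rw [← mul_assoc, qcomm_pow h, smul_mul_assoc, mul_assoc]

namespace WData

section

variable {K : Type*} [Field K] (D : WData K)

/-- The PBW monomial `y^j x^i s^k t^l` for `n = (j, i, k, l)`. -/
def pbw (n : ℕ × ℕ × ℕ × ℕ) : D.B :=
  D.by' ^ n.1 * (D.bx ^ n.2.1 * (D.bs ^ n.2.2.1 * D.bt ^ n.2.2.2))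

/-- The `K[w]`-linear combination of PBW monomials with given coefficients. -/
def theta : ((ℕ × ℕ × ℕ × ℕ) →₀ K[X]) →+ D.B :=
  Finsupp.liftAddHom fun n => (AddMonoidHom.mulRight (D.pbw n)).comp D.iota.toAddMonoidHom

/-- `b` is a `K[w]`-linear combination of PBW monomials. -/
def Spanned (b : D.B) : Prop := ∃ w, D.theta w = b

variable {D} in
lemma Spanned.add {a b : D.B} (ha : D.Spanned a) (hb : D.Spanned b) : D.Spanned (a + b) := by
  obtain ⟨u, rfl⟩ := ha
  obtain ⟨v, rfl⟩ := hb
  exact ⟨u + v, map_add _ _ _⟩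

lemma spanned_zero : D.Spanned 0 := ⟨0, map_zero _⟩

lemma theta_single (n : ℕ × ℕ × ℕ × ℕ) (f : K[X]) :
    D.theta (Finsupp.single n f) = D.iota f * D.pbw n := by
  simp [theta]

lemma smul_eq_iota (r : K) (b : D.B) : r • b = D.iota (C r) * b := by
  rw [iota_C, Algebra.smul_def]

lemma iota_mul_theta (f : K[X]) (w : (ℕ × ℕ × ℕ × ℕ) →₀ K[X]) :
    D.Spanned (D.iota f * D.theta w) := by
  induction w using Finsupp.induction_linear with
  | zero => rw [map_zero, mul_zero]; exact D.spanned_zero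
  | add u v hu hv => rw [map_add, mul_add]; exact hu.add hv
  | single n g => exact ⟨Finsupp.single n (f * g), by rw [theta_single, theta_single, map_mul, mul_assoc]⟩

lemma pbw_mem (n : ℕ × ℕ × ℕ × ℕ) : D.Spanned (D.pbw n) :=
  ⟨Finsupp.single n 1, by simp [theta_single]⟩

lemma smul_pbw_mem (r : K) (n : ℕ × ℕ × ℕ × ℕ) : D.Spanned (r • D.pbw n) :=
  ⟨Finsupp.single n (C r), by rw [theta_single, smul_eq_iota]⟩

lemma mul_theta_mem {u : D.B} (hu : ∀ n, D.Spanned (u * D.pbw n))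
    (w : (ℕ × ℕ × ℕ × ℕ) →₀ K[X]) : D.Spanned (u * D.theta w) := by
  induction w using Finsupp.induction_linear with
  | zero => rw [map_zero, mul_zero]; exact D.spanned_zero
  | add u v hu hv => rw [map_add, mul_add]; exact hu.add hv
  | single n g =>
    rw [theta_single, ← mul_assoc, ← iota_comm, mul_assoc]
    obtain ⟨w, hw⟩ := hu n
    rw [← hw]
    exact D.iota_mul_theta g w

lemma x_mul_y_pow (j : ℕ) : ∃ a b : K, D.bx * D.by' ^ (j + 1) =
    a • (D.by' ^ (j + 1) * D.bx) + b • D.by' ^ j := by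
  induction j with
  | zero => exact ⟨D.P, 1, by simpa using D.rel_xy⟩
  | succ j ih =>
    obtain ⟨a, b, h⟩ := ih
    refine ⟨a * D.P, a + b, ?_⟩
    rw [pow_succ, ← mul_assoc, h, add_mul, smul_mul_assoc, mul_assoc, rel_xy, mul_add, mul_one,
      mul_smul_comm, smul_add, smul_smul, smul_mul_assoc, ← mul_assoc, ← pow_succ, ← pow_succ,
      add_smul, add_assoc]

lemma x_mul_pbw (n : ℕ × ℕ × ℕ × ℕ) : D.Spanned (D.bx * D.pbw n) := by
  obtain ⟨j, i, k, l⟩ := n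
  cases j with
  | zero =>
    convert D.pbw_mem (0, i + 1, k, l) using 1
    simp [pbw, pow_succ', mul_assoc]
  | succ j =>
    obtain ⟨a, b, h⟩ := D.x_mul_y_pow j
    have : D.bx * D.pbw (j + 1, i, k, l) =
        a • D.pbw (j + 1, i + 1, k, l) + b • D.pbw (j, i, k, l) := by
      simp only [pbw]
      rw [← mul_assoc, h, add_mul, smul_mul_assoc, smul_mul_assoc, pow_succ' D.bx]
      simp only [mul_assoc]
    rw [this]
    exact (D.smul_pbw_mem _ _).add (D.smul_pbw_mem _ _)

lemma y_mul_pbw (n : ℕ × ℕ × ℕ × ℕ) : D.by' * D.pbw n = D.pbw (n.1 + 1, n.2) := by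
  simp [pbw, pow_succ', mul_assoc]

lemma s_mul_pbw (n : ℕ × ℕ × ℕ × ℕ) : D.Spanned (D.bs * D.pbw n) := by
  obtain ⟨j, i, k, l⟩ := n
  have : D.bs * D.pbw (j, i, k, l) =
      (((D.L : K)⁻¹) ^ j * (D.L : K) ^ i) • D.pbw (j, i, k + 1, l) := by
    simp only [pbw]
    rw [qcomm_pow_mul (K := K) (B := D.B) D.rel_sy,
      qcomm_pow_mul (K := K) (B := D.B) D.rel_sx,
      mul_smul_comm, smul_smul,
      pow_succ' D.bs, mul_assoc D.bs]
  rw [this]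
  exact D.smul_pbw_mem _ _

lemma rel_ts : D.bt * D.bs = (D.Q : K)⁻¹ • (D.bs * D.bt) := by
  rw [rel_st, smul_smul, inv_mul_cancel₀ D.Q.ne_zero, one_smul]

lemma t_mul_pbw (n : ℕ × ℕ × ℕ × ℕ) : D.Spanned (D.bt * D.pbw n) := by
  obtain ⟨j, i, k, l⟩ := n
  have : D.bt * D.pbw (j, i, k, l) =
      (((D.U : K)⁻¹) ^ j * (D.U : K) ^ i * ((D.Q : K)⁻¹) ^ k) • D.pbw (j, i, k, l + 1) := by
    simp only [pbw]
    rw [qcomm_pow_mul (K := K) (B := D.B) D.rel_ty,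
      qcomm_pow_mul (K := K) (B := D.B) D.rel_tx,
      qcomm_pow_mul (K := K) (B := D.B) D.rel_ts,
      mul_smul_comm, mul_smul_comm, mul_smul_comm, smul_smul, smul_smul, pow_succ' D.bt]
  rw [this]
  exact D.smul_pbw_mem _ _

/-- The PBW monomials span `B` over `K[w]`: their span contains `1` and is stable under left
multiplication by the generators. -/
lemma theta_surjective (b : D.B) : ∃ w, D.theta w = b := by
  let S : Subalgebra K D.B :=
    { carrier := {u | ∀ v, D.Spanned v → D.Spanned (u * v)}
      mul_mem' := by
        intro a b ha hb v hv
        rw [mul_assoc]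
        exact ha _ (hb _ hv)
      add_mem' := by
        intro a b ha hb v hv
        rw [add_mul]
        exact (ha _ hv).add (hb _ hv)
      algebraMap_mem' := by
        rintro r _ ⟨w, rfl⟩
        rw [← iota_C]
        exact D.iota_mul_theta _ _ }
  have h1 : b ∈ S := by
    refine subalgebra_B_eq_top (S := S) ?_ ?_ ?_ ?_ ?_ b
    · rintro _ ⟨w, rfl⟩
      exact D.mul_theta_mem D.x_mul_pbw w
    · rintro _ ⟨w, rfl⟩
      exact D.mul_theta_mem (fun n => D.y_mul_pbw n ▸ D.pbw_mem _) w
    · rintro _ ⟨w, rfl⟩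
      exact D.mul_theta_mem D.s_mul_pbw w
    · rintro _ ⟨w, rfl⟩
      exact D.mul_theta_mem D.t_mul_pbw w
    · rintro _ ⟨w, rfl⟩
      rw [← iota_X]
      exact D.iota_mul_theta _ _
  have h2 := h1 1 ⟨Finsupp.single 0 1, by simp [theta_single, pbw]⟩
  rwa [mul_one] at h2

lemma ev_pow_single {b : D.B} {g : Exps} (hb : D.ev b = Finsupp.single g 1)
    (hg : ∀ n : ℕ, D.cocK (n • g) g = 1) (n : ℕ) : D.ev (b ^ n) = Finsupp.single (n • g) 1 := by
  induction n with
  | zero => simp [ev_one]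
  | succ n ih =>
    rw [pow_succ, ev_mul, ih, hb, op_single, hg, succ_nsmul]
    simp

lemma ev_mon (i n k l : ℕ) : D.ev (D.bz ^ i * (D.bx ^ n * (D.bs ^ k * D.bt ^ l))) =
    Finsupp.single ((i : ℤ), (n : ℤ), (k : ℤ), (l : ℤ)) 1 := by
  rw [ev_mul, ev_mul, ev_mul, D.ev_pow_single D.ev_bz, D.ev_pow_single D.ev_bx,
    D.ev_pow_single D.ev_bs, D.ev_pow_single D.ev_bt]
  · simp only [op_single]
    simp [cocK]
  all_goals simp [cocK]

lemma op_vy_apply (v : Exps →₀ K[X]) (g : Exps) :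
    D.op D.vy v g = C ((D.P : K) - 1)⁻¹ *
      (v (g - (1, -1, 0, 0)) * C (D.cocK (1, -1, 0, 0) (g - (1, -1, 0, 0)) : K) -
        v (g - (0, -1, 0, 0)) * C (D.cocK (0, -1, 0, 0) (g - (0, -1, 0, 0)) : K)) := by
  rw [vy, map_sub, LinearMap.sub_apply, Finsupp.sub_apply]
  have h1 := tw_single_left_apply D.coc (1, -1, 0, 0) (C ((D.P : K) - 1)⁻¹) v (g - (1, -1, 0, 0))
  have h2 := tw_single_left_apply D.coc (0, -1, 0, 0) (C ((D.P : K) - 1)⁻¹) v (g - (0, -1, 0, 0))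
  rw [add_sub_cancel, coc_val] at h1 h2
  rw [h1, h2]
  ring

/-- The monomial `y^j x^i s^k t^l` has exactly one term whose exponent of `z` is at least `j`, namely
the one at `z^j x^(i-j) s^k t^l`. -/
lemma ev_pbw_lead (j i k l : ℕ) :
    (∀ g : Exps, (j : ℤ) ≤ g.1 → g ≠ ((j : ℤ), (i : ℤ) - j, (k : ℤ), (l : ℤ)) →
      D.ev (D.pbw (j, i, k, l)) g = 0) ∧
    D.ev (D.pbw (j, i, k, l)) ((j : ℤ), (i : ℤ) - j, (k : ℤ), (l : ℤ)) ≠ 0 := by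
  induction j with
  | zero =>
    have h := D.ev_mon 0 i k l
    have h' : D.ev (D.pbw (0, i, k, l)) = Finsupp.single ((0 : ℤ), (i : ℤ), (k : ℤ), (l : ℤ)) 1 := by
      simpa [pbw] using h
    rw [h']
    constructor
    · intro g _ hg
      rw [Finsupp.single_apply, if_neg]
      rintro rfl
      simp at hg
    · simp
  | succ j ih =>
    obtain ⟨ih1, ih2⟩ := ih
    have h : D.pbw (j + 1, i, k, l) = D.by' * D.pbw (j, i, k, l) := (D.y_mul_pbw (j, i, k, l)).symm
    rw [h, ev_mul, ev_by]
    have hz : ∀ g : Exps, (j : ℤ) + 1 ≤ g.1 →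
        D.ev (D.pbw (j, i, k, l)) (g - (0, -1, 0, 0)) = 0 := by
      rintro ⟨g1, g2, g3, g4⟩ hg
      simp only at hg
      refine ih1 _ (by simp; lia) ?_
      simp only [Prod.mk_sub_mk, ne_eq, Prod.mk.injEq, not_and]
      intro h
      lia
    constructor
    · rintro g hg hne
      push_cast at hg
      rw [op_vy_apply, hz g hg, ih1, zero_mul, zero_mul, sub_zero, mul_zero]
      · obtain ⟨g1, g2, g3, g4⟩ := g
        simp at hg ⊢
        lia
      · rintro h
        apply hne
        rw [sub_eq_iff_eq_add] at h
        rw [h]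
        simp
        ring
    · rw [op_vy_apply, hz _ (by simp), zero_mul, sub_zero]
      have e : ((((j + 1 : ℕ) : ℤ), (i : ℤ) - ((j + 1 : ℕ) : ℤ), (k : ℤ), (l : ℤ)) : Exps) -
          (1, -1, 0, 0) = ((j : ℤ), (i : ℤ) - j, (k : ℤ), (l : ℤ)) := by
        simp
        ring
      rw [e]
      refine mul_ne_zero ?_ (mul_ne_zero ih2 ?_)
      · exact C_ne_zero.2 (inv_ne_zero D.P_sub_one_ne)
      · exact C_ne_zero.2 (Units.ne_zero _)

lemma ev_theta (w : (ℕ × ℕ × ℕ × ℕ) →₀ K[X]) :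
    D.ev (D.theta w) = w.sum fun n f => f • D.ev (D.pbw n) := by
  induction w using Finsupp.induction_linear with
  | zero => simp
  | add u v hu hv =>
    rw [map_add, map_add, hu, hv, Finsupp.sum_add_index'] <;> simp [add_smul]
  | single n g => rw [theta_single, ev_iota_mul, Finsupp.sum_single_index]; simp

/-- A nontrivial combination of PBW monomials has a nonzero coefficient at the leading exponent of a
monomial with maximal power of `y`. -/
lemma ev_injective : Function.Injective D.ev := by
  rw [injective_iff_map_eq_zero]
  intro b hb
  obtain ⟨w, rfl⟩ := D.theta_surjective b
  by_contra hne
  have hw : w ≠ 0 := by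
    rintro rfl
    simp at hne
  obtain ⟨⟨j, i, k, l⟩, hm, hmax⟩ := w.support.exists_max_image (fun n => n.1)
    (Finsupp.support_nonempty_iff.2 hw)
  rw [ev_theta] at hb
  have h := DFunLike.congr_fun hb ((j : ℤ), (i : ℤ) - j, (k : ℤ), (l : ℤ))
  rw [Finsupp.sum, Finsupp.finsetSum_apply, Finset.sum_eq_single (j, i, k, l)] at h
  · simp only [Finsupp.smul_apply, smul_eq_mul, Finsupp.coe_zero, Pi.zero_apply,
      mul_eq_zero] at h
    rcases h with h | h
    · exact Finsupp.mem_support_iff.1 hm h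
    · exact (D.ev_pbw_lead j i k l).2 h
  · rintro ⟨j', i', k', l'⟩ hm' hne'
    rw [Finsupp.smul_apply, (D.ev_pbw_lead j' i' k' l').1, smul_zero]
    · have := hmax _ hm'
      simp only at this ⊢
      exact_mod_cast this
    · intro e
      apply hne'
      simp only [Prod.mk.injEq] at e ⊢
      lia
  · intro h
    exact absurd hm h

/-! ### Constraints on the image of `ev` -/

/-- The specialization `z ↦ 1` of the coefficient of `x^n s^k t^l`, where `m = (n, k, l)`. -/
def sig (m : ℤ × ℤ × ℤ) : (Exps →₀ K[X]) →ₗ[K[X]] K[X] :=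
  Finsupp.linearCombination K[X] fun g : Exps => if g.2 = m then (1 : K[X]) else 0

lemma sig_single (m : ℤ × ℤ × ℤ) (g : Exps) (a : K[X]) :
    sig m (Finsupp.single g a) = if g.2 = m then a else 0 := by
  simp [sig, Finsupp.linearCombination_single]

/-- The constraints satisfied by the image of `ev`: nonnegative exponents of `z`, `s`, `t`, and
vanishing at `z = 1` of the coefficients of negative powers of `x`. -/
def Good (v : Exps →₀ K[X]) : Prop :=
  (∀ g, v g ≠ 0 → 0 ≤ g.1 ∧ 0 ≤ g.2.2.1 ∧ 0 ≤ g.2.2.2) ∧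
    ∀ n k l : ℤ, n < 0 → sig (n, k, l) v = 0

/-- The cocycle `cocK g h` does not depend on the exponent of `z` in `g`, so right multiplication by
a monomial is compatible with setting `z = 1`. -/
lemma sig_op_single (m : ℤ × ℤ × ℤ) (v : Exps →₀ K[X]) (h : Exps) (a : K[X]) :
    sig m (D.op v (Finsupp.single h a)) =
      a * C (D.cocK (0, m - h.2) h : K) * sig (m - h.2) v := by
  induction v using Finsupp.induction_linear with
  | zero => simp
  | add u u' hu hu' => rw [map_add, LinearMap.add_apply, map_add, hu, hu', map_add, mul_add]
  | single g b =>
    rw [op_single, sig_single, sig_single]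
    by_cases hg : g.2 + h.2 = m
    · obtain rfl : m = g.2 + h.2 := hg.symm
      have : D.cocK g h = D.cocK (0, g.2) h := rfl
      simp only [Prod.snd_add, if_true, add_sub_cancel_right]
      rw [this]
      ring
    · rw [if_neg (by simpa using hg), if_neg (by rwa [eq_sub_iff_add_eq]), mul_zero]

lemma op_single_ne {v : Exps →₀ K[X]} {h g : Exps} {a : K[X]}
    (hv : D.op v (Finsupp.single h a) g ≠ 0) : v (g - h) ≠ 0 := by
  have := tw_single_right_apply D.coc h a v (g - h)
  rw [sub_add_cancel] at this
  intro h0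
  rw [h0, zero_mul, zero_mul] at this
  exact hv this

variable {D} in
lemma Good.add {u v : Exps →₀ K[X]} (hu : Good u) (hv : Good v) : Good (u + v) := by
  refine ⟨fun g hg => ?_, fun n k l hn => ?_⟩
  · by_cases h : u g = 0
    · exact hv.1 g (by simpa [h] using hg)
    · exact hu.1 g h
  · rw [map_add, hu.2 n k l hn, hv.2 n k l hn, add_zero]

variable {D} in
/-- The constraints are stable under right multiplication by `x`, `s`, `t` and `K[w]`. -/
lemma Good.op_single {v : Exps →₀ K[X]} (hv : Good v) (h : Exps) (a : K[X])
    (h1 : 0 ≤ h.1) (h2 : 0 ≤ h.2.1) (h3 : 0 ≤ h.2.2.1) (h4 : 0 ≤ h.2.2.2) :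
    Good (D.op v (Finsupp.single h a)) := by
  obtain ⟨i', n', k', l'⟩ := h
  refine ⟨fun g hg => ?_, fun n k l hn => ?_⟩
  · have := hv.1 _ (D.op_single_ne hg)
    simp at this h1 h3 h4
    lia
  · rw [sig_op_single]
    simp only at h2
    simp only [Prod.mk_sub_mk]
    rw [hv.2 _ _ _ (by lia), mul_zero]

variable {D} in
/-- The constraints are stable under right multiplication by `y`. The coefficient of `x^(-1)` in
`v y` comes from that of `x^0` in `v`, multiplied by `z - 1`, which vanishes at `z = 1`. -/
lemma Good.op_vy {v : Exps →₀ K[X]} (hv : Good v) : Good (D.op v D.vy) := by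
  rw [vy, map_sub]
  refine ⟨fun g hg => ?_, fun n k l hn => ?_⟩
  · by_cases h : D.op v (Finsupp.single (0, -1, 0, 0) (C ((D.P : K) - 1)⁻¹)) g = 0
    · rw [Finsupp.sub_apply, h, sub_zero] at hg
      have := hv.1 _ (D.op_single_ne hg)
      simp at this
      lia
    · have := hv.1 _ (D.op_single_ne h)
      simp at this
      lia
  · rw [map_sub, sig_op_single, sig_op_single]
    simp only [Prod.mk_sub_mk]
    rcases (show n + 1 < 0 ∨ n = -1 by lia) with h | rfl
    · rw [hv.2 _ _ _ (by lia), mul_zero, mul_zero, sub_zero]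
    · simp [cocK]

lemma good_ev (b : D.B) : Good (D.ev b) := by
  let S : Subalgebra K D.B :=
    { carrier := {a | ∀ b, Good (D.ev b) → Good (D.ev (b * a))}
      mul_mem' := by
        intro a b ha hb v hv
        rw [← mul_assoc]
        exact hb _ (ha _ hv)
      add_mem' := by
        intro a b ha hb v hv
        rw [mul_add, map_add]
        exact (ha _ hv).add (hb _ hv)
      algebraMap_mem' := by
        intro r b hb
        rw [← iota_C, ev_mul, ev_iota]
        exact hb.op_single _ _ le_rfl le_rfl le_rfl le_rfl }
  have h1 : b ∈ S := by
    refine subalgebra_B_eq_top (S := S) ?_ ?_ ?_ ?_ ?_ b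
    · intro b hb
      rw [ev_mul, ev_bx]
      exact hb.op_single _ _ (by simp) (by simp) (by simp) (by simp)
    · intro b hb
      rw [ev_mul, ev_by]
      exact hb.op_vy
    · intro b hb
      rw [ev_mul, ev_bs]
      exact hb.op_single _ _ (by simp) (by simp) (by simp) (by simp)
    · intro b hb
      rw [ev_mul, ev_bt]
      exact hb.op_single _ _ (by simp) (by simp) (by simp) (by simp)
    · intro b hb
      rw [ev_mul, ← iota_X, ev_iota]
      exact hb.op_single _ _ le_rfl le_rfl le_rfl le_rfl
  have h2 := h1 1 ?_
  · rwa [one_mul] at h2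
  · rw [ev_one]
    refine ⟨fun g hg => ?_, fun n k l hn => ?_⟩
    · rw [Finsupp.single_apply_ne_zero] at hg
      rw [hg.1]
      simp
    · rw [sig_single, if_neg]
      intro h
      exact hn.ne' (congrArg Prod.fst h)

/-! ### Normal elements -/

lemma P_inj {a b : ℤ} (h : D.P ^ a = D.P ^ b) : a = b :=
  sub_eq_zero.1 (D.hP _ (by rw [zpow_sub, h, mul_inv_cancel]))

lemma Q_inj {a b : ℤ} (h : D.Q ^ a = D.Q ^ b) : a = b :=
  sub_eq_zero.1 (D.hQ _ (by rw [zpow_sub, h, mul_inv_cancel]))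

lemma ev_ne_zero {b : D.B} (hb : b ≠ 0) : D.ev b ≠ 0 := by
  intro h
  exact hb (D.ev_injective (h.trans (map_zero _).symm))

/-- A (left) normal element: `B N ⊆ N B`. -/
def Nrm (N : D.B) : Prop := ∀ b, ∃ a, b * N = N * a

/-- If `v` conjugates the monomial with exponent `m`, then all monomials in the support of `v`
commute with it up to the same scalar. -/
lemma conj_eq {m : Exps} {u v : Exps →₀ K[X]} (hv : v ≠ 0)
    (h : D.op (Finsupp.single m 1) v = D.op v u) {g g' : Exps} (hg : v g ≠ 0) (hg' : v g' ≠ 0) :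
    D.cocK m g * D.cocK g' m = D.cocK m g' * D.cocK g m := by
  have h1 := tw_conj D.coc expsLex expsLex_injective hv h (Finsupp.mem_support_iff.2 hg)
  have h2 := tw_conj D.coc expsLex expsLex_injective hv h (Finsupp.mem_support_iff.2 hg')
  simp only [coc_val] at h1 h2
  ext
  apply C_injective
  push_cast
  rw [C_mul, C_mul, h1, h2]
  ring

/-- A normal element conjugates `z`, `s`, `t` and `x`, and the resulting scalars determine the
exponents of `x`, then `l` and `k`, then `i`; so its image has a single term. -/
lemma nrm_support {N : D.B} (hN : N ≠ 0) (h : D.Nrm N) {g g' : Exps} (hg : D.ev N g ≠ 0)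
    (hg' : D.ev N g' ≠ 0) : g = g' := by
  have key : ∀ (m : Exps) (b : D.B), D.ev b = Finsupp.single m 1 →
      D.cocK m g * D.cocK g' m = D.cocK m g' * D.cocK g m := by
    intro m b hb
    obtain ⟨a, ha⟩ := h b
    refine D.conj_eq (u := D.ev a) (D.ev_ne_zero hN) ?_ hg hg'
    rw [← hb, ← ev_mul, ha, ev_mul]
  have hz := key _ _ D.ev_bz
  have hs := key _ _ D.ev_bs
  have ht := key _ _ D.ev_bt
  have hx := key _ _ D.ev_bx
  obtain ⟨i, n, k, l⟩ := g
  obtain ⟨i', n', k', l'⟩ := g'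
  simp [cocK, -zpow_neg] at hz hs ht hx
  have en := D.P_inj hz
  subst en
  rw [mul_right_inj] at hs ht
  have el := D.Q_inj hs
  have ek := D.Q_inj ht
  obtain rfl : k = k' := by lia
  obtain rfl : l = l' := by lia
  rw [mul_left_inj] at hx
  rw [D.P_inj hx]

/-- Nonzero normal elements are of the form `c z^i s^k t^l` with `c ∈ K[w]`. -/
lemma nrm_classify {N : D.B} (hN : N ≠ 0) (h : D.Nrm N) :
    ∃ (i k l : ℕ) (c : K[X]), c ≠ 0 ∧ N = D.iota c * (D.bz ^ i * (D.bs ^ k * D.bt ^ l)) := by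
  obtain ⟨g, hg⟩ : ∃ g, D.ev N g ≠ 0 := by
    by_contra! h0
    exact D.ev_ne_zero hN (Finsupp.ext h0)
  have hsingle : D.ev N = Finsupp.single g (D.ev N g) := by
    ext1 g'
    rw [Finsupp.single_apply]
    split_ifs with e
    · rw [e]
    · by_contra h0
      exact e (D.nrm_support hN h hg h0)
  generalize hc : D.ev N g = c at hsingle hg
  have hgood := (D.good_ev N).1 g (by rwa [hc])
  obtain ⟨i, n, k, l⟩ := g
  simp only at hgood
  obtain ⟨h1, h2, h3⟩ := hgood
  have hn : n = 0 := by
    by_contra hn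
    rcases lt_or_gt_of_ne hn with hn | hn
    · have := (D.good_ev N).2 n k l hn
      rw [hsingle, sig_single, if_pos rfl] at this
      exact hg this
    · -- `y N = N a` determines `ev a`: it is `y` with its two terms rescaled by `r`, and vanishing
      -- at `z = 1` requires both factors to be equal, that is `p ^ n = 1`.
      obtain ⟨a, ha⟩ := h D.by'
      have e := congrArg D.ev ha
      rw [ev_mul, ev_mul, hsingle, ev_by] at e
      have hsig := (D.good_ev a).2 (-1) 0 0 (by norm_num)
      let r : Exps → K := fun m =>
        ((D.P : K) - 1)⁻¹ * ((D.cocK m (i, n, k, l) / D.cocK (i, n, k, l) m : Kˣ) : K)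
      have ea : D.ev a = Finsupp.single (1, -1, 0, 0) (C (r (1, -1, 0, 0))) -
          Finsupp.single (0, -1, 0, 0) (C (r (0, -1, 0, 0))) := by
        apply tw_single_left_injective D.coc (i, n, k, l) hg
        refine e.symm.trans ?_
        have key : ∀ m : Exps, c * C (r m) * C (D.cocK (i, n, k, l) m : K) =
            C ((D.P : K) - 1)⁻¹ * c * C (D.cocK m (i, n, k, l) : K) := by
          intro m
          rw [mul_assoc, ← C_mul, mul_comm _ c, mul_assoc c, ← C_mul]
          congr 2
          simp only [r]
          rw [mul_assoc, ← Units.val_mul, div_mul_cancel]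
        rw [vy, map_sub, map_sub, LinearMap.sub_apply]
        simp only [op_single]
        rw [key, key, add_comm (1, -1, 0, 0), add_comm (0, -1, 0, 0)]
      rw [ea, map_sub, sig_single, sig_single, if_pos rfl, if_pos rfl, ← C_sub, C_eq_zero,
        sub_eq_zero] at hsig
      have h4 := Units.ext (mul_left_cancel₀ (inv_ne_zero D.P_sub_one_ne) hsig)
      simp [cocK, -zpow_neg] at h4
      exact hn.ne' (D.hP n h4)
  subst hn
  lift i to ℕ using h1
  lift k to ℕ using h2
  lift l to ℕ using h3
  refine ⟨i, k, l, c, hg, D.ev_injective ?_⟩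
  have := D.ev_mon i 0 k l
  rw [pow_zero, one_mul] at this
  rw [ev_iota_mul, this, hsingle, Finsupp.smul_single, smul_eq_mul, mul_one]
  rfl

/-! ### The center and the image of `w` -/

variable {D} in
lemma nrm_of_gens {N : D.B} (hx : ∃ a, D.bx * N = N * a) (hy : ∃ a, D.by' * N = N * a)
    (hs : ∃ a, D.bs * N = N * a) (ht : ∃ a, D.bt * N = N * a) : D.Nrm N := by
  let S : Subalgebra K D.B :=
    { carrier := {b | ∃ a, b * N = N * a}
      mul_mem' := by
        rintro b b' ⟨a, ha⟩ ⟨a', ha'⟩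
        exact ⟨a * a', by rw [mul_assoc, ha', ← mul_assoc, ha, mul_assoc]⟩
      add_mem' := by
        rintro b b' ⟨a, ha⟩ ⟨a', ha'⟩
        exact ⟨a + a', by rw [add_mul, ha, ha', mul_add]⟩
      algebraMap_mem' := fun r => ⟨algebraMap K D.B r, Algebra.commutes _ _⟩ }
  intro b
  refine subalgebra_B_eq_top (S := S) hx hy hs ht ⟨X, ?_⟩ b
  rw [← iota_X, iota_comm]

lemma nrm_bz : D.Nrm D.bz := by
  refine nrm_of_gens ⟨(D.P : K) • D.bx, ?_⟩ ⟨(D.P : K)⁻¹ • D.by', ?_⟩ ⟨D.bs, ?_⟩ ⟨D.bt, ?_⟩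
  · apply D.ev_injective
    rw [mul_smul_comm, map_smul, ev_mul, ev_mul, ev_bx, ev_bz, vx, vz, op_single, op_single,
      smul_eq_C', Finsupp.smul_single]
    simp [cocK]
  · apply D.ev_injective
    rw [mul_smul_comm, map_smul, ev_mul, ev_mul, ev_by, ev_bz, vy, vz, map_sub, map_sub,
      LinearMap.sub_apply]
    simp only [op_single]
    rw [smul_eq_C', smul_sub, Finsupp.smul_single, Finsupp.smul_single]
    simp [cocK, mul_comm]
  · apply D.ev_injective
    rw [ev_mul, ev_mul, ev_bs, ev_bz, vs, vz, op_single, op_single]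
    simp [cocK]
  · apply D.ev_injective
    rw [ev_mul, ev_mul, ev_bt, ev_bz, vt, vz, op_single, op_single]
    simp [cocK]

lemma nrm_of_comm {N b : D.B} {a : K} (ha : a ≠ 0) (h : N * b = a • (b * N)) :
    ∃ c, b * N = N * c :=
  ⟨a⁻¹ • b, by rw [mul_smul_comm, h, smul_smul, inv_mul_cancel₀ ha, one_smul]⟩

lemma nrm_bs : D.Nrm D.bs :=
  nrm_of_gens (D.nrm_of_comm D.L.ne_zero D.rel_sx)
    (D.nrm_of_comm (inv_ne_zero D.L.ne_zero) D.rel_sy) ⟨D.bs, rfl⟩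
    (D.nrm_of_comm D.Q.ne_zero D.rel_st)

lemma nrm_bt : D.Nrm D.bt :=
  nrm_of_gens (D.nrm_of_comm D.U.ne_zero D.rel_tx)
    (D.nrm_of_comm (inv_ne_zero D.U.ne_zero) D.rel_ty)
    (D.nrm_of_comm (inv_ne_zero D.Q.ne_zero) D.rel_ts) ⟨D.bt, rfl⟩

variable {D} in
lemma Nrm.map {N : D.B} (h : D.Nrm N) (φ : D.B ≃ₐ[K] D.B) : D.Nrm (φ N) := by
  intro b
  obtain ⟨a, ha⟩ := h (φ.symm b)
  refine ⟨φ a, ?_⟩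
  rw [← map_mul, ← ha, map_mul, AlgEquiv.apply_symm_apply]

/-- `ev b` is a single nonzero term with exponent `g`. -/
def IsMon (b : D.B) (g : Exps) : Prop := ∃ c : K[X], c ≠ 0 ∧ D.ev b = Finsupp.single g c

variable {D} in
lemma IsMon.mul {a b : D.B} {g h : Exps} (ha : D.IsMon a g) (hb : D.IsMon b h) :
    D.IsMon (a * b) (g + h) := by
  obtain ⟨c, hc, ha⟩ := ha
  obtain ⟨d, hd, hb⟩ := hb
  exact ⟨_, mul_ne_zero (mul_ne_zero hc hd) (C_ne_zero.2 (Units.ne_zero _)),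
    by rw [ev_mul, ha, hb, op_single]⟩

lemma isMon_iota {f : K[X]} (hf : f ≠ 0) : D.IsMon (D.iota f) 0 := ⟨f, hf, D.ev_iota f⟩

lemma isMon_one : D.IsMon 1 0 := ⟨1, one_ne_zero, D.ev_one⟩

variable {D} in
lemma IsMon.pow {b : D.B} {g : Exps} (hb : D.IsMon b g) (n : ℕ) : D.IsMon (b ^ n) (n • g) := by
  induction n with
  | zero => simpa using D.isMon_one
  | succ n ih =>
    rw [pow_succ, succ_nsmul]
    exact ih.mul hb

variable {D} in
lemma IsMon.unique {b : D.B} {g h : Exps} (hg : D.IsMon b g) (hh : D.IsMon b h) : g = h := by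
  obtain ⟨c, hc, hg⟩ := hg
  obtain ⟨d, hd, hh⟩ := hh
  rw [hg] at hh
  rcases (Finsupp.single_eq_single_iff ..).1 hh with h | h
  · exact h.1
  · exact absurd h.1 hc

variable {D} in
lemma IsMon.ne_zero {b : D.B} {g : Exps} (hg : D.IsMon b g) : b ≠ 0 := by
  rintro rfl
  obtain ⟨c, hc, hg⟩ := hg
  rw [map_zero, eq_comm, Finsupp.single_eq_zero] at hg
  exact hc hg

variable {D} in
/-- Commutation of two monomials determines the commutation character. -/
lemma IsMon.comm {a b : D.B} {g h : Exps} (ha : D.IsMon a g) (hb : D.IsMon b h) {r : Kˣ}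
    (hab : a * b = (r : K) • (b * a)) : D.cocK g h = r * D.cocK h g := by
  obtain ⟨c, hc, ha⟩ := ha
  obtain ⟨d, hd, hb⟩ := hb
  have e := congrArg D.ev hab
  rw [map_smul, ev_mul, ev_mul, ha, hb, op_single, op_single, smul_eq_C', Finsupp.smul_single,
    add_comm h g, smul_eq_mul] at e
  have e := Finsupp.single_injective _ e
  ext
  apply C_injective
  push_cast
  rw [C_mul]
  apply mul_left_cancel₀ (mul_ne_zero hc hd)
  rw [e]
  ring

lemma isMon_bz : D.IsMon D.bz (1, 0, 0, 0) := ⟨1, one_ne_zero, D.ev_bz⟩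
lemma isMon_bx : D.IsMon D.bx (0, 1, 0, 0) := ⟨1, one_ne_zero, D.ev_bx⟩
lemma isMon_bs : D.IsMon D.bs (0, 0, 1, 0) := ⟨1, one_ne_zero, D.ev_bs⟩
lemma isMon_bt : D.IsMon D.bt (0, 0, 0, 1) := ⟨1, one_ne_zero, D.ev_bt⟩

lemma isMon_nm {c : K[X]} (hc : c ≠ 0) (i k l : ℕ) :
    D.IsMon (D.iota c * (D.bz ^ i * (D.bs ^ k * D.bt ^ l))) ((i : ℤ), 0, (k : ℤ), (l : ℤ)) := by
  have := (D.isMon_iota hc).mul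
    ((D.isMon_bz.pow i).mul ((D.isMon_bs.pow k).mul (D.isMon_bt.pow l)))
  simpa using this

/-- The center of `B` is `K[w]`. -/
lemma central {N : D.B} (h : ∀ b, b * N = N * b) : ∃ c : K[X], N = D.iota c := by
  by_cases hN : N = 0
  · exact ⟨0, by rw [hN, map_zero]⟩
  obtain ⟨i, k, l, c, hc, rfl⟩ := D.nrm_classify hN fun b => ⟨b, h b⟩
  have hm := D.isMon_nm hc i k l
  have hs := D.isMon_bs.comm (r := 1) hm (by rw [h, Units.val_one, one_smul])
  have ht := D.isMon_bt.comm (r := 1) hm (by rw [h, Units.val_one, one_smul])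
  have hx := D.isMon_bx.comm (r := 1) hm (by rw [h, Units.val_one, one_smul])
  simp [cocK, -zpow_neg] at hs ht hx
  have hl := D.hQ (-l) hs.symm
  have hk := D.hQ (-k) ht
  obtain rfl : l = 0 := by lia
  obtain rfl : k = 0 := by lia
  have hi := D.hP i (by simpa using hx)
  obtain rfl : i = 0 := by lia
  exact ⟨c, by simp⟩

lemma iota_injective : Function.Injective D.iota := by
  intro f g h
  have := congrArg D.ev h
  rw [ev_iota, ev_iota] at this
  exact Finsupp.single_injective _ this

/-- Automorphisms preserve the center `K[w]`. -/
lemma map_iota (φ : D.B ≃ₐ[K] D.B) (f : K[X]) : ∃ f', φ (D.iota f) = D.iota f' := by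
  apply D.central
  intro b
  rw [← φ.apply_symm_apply b, ← map_mul, ← map_mul, iota_comm]

lemma map_iota_eq (φ : D.B ≃ₐ[K] D.B) {f : K[X]} (hf : φ X = D.iota f) (h : K[X]) :
    φ (D.iota h) = D.iota (h.comp f) := by
  induction h using Polynomial.induction_on' with
  | add p q hp hq => rw [map_add, map_add, hp, hq, add_comp, map_add]
  | monomial n a =>
    rw [← C_mul_X_pow_eq_monomial, map_mul, map_mul, map_pow, map_pow, iota_X, iota_C, hf,
      AlgEquiv.commutes, mul_comp, C_comp, X_pow_comp, map_mul, map_pow, iota_C]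

/-- `φ(w) = a w + b`: if `φ(w) = f` and `φ⁻¹(w) = f'` then `f'(f(w)) = w`, so `f` has degree one. -/
lemma map_X (φ : D.B ≃ₐ[K] D.B) : ∃ (a : Kˣ) (b : K),
    φ X = (a : K) • X + C (algebraMap K D.A b) := by
  obtain ⟨f, hf⟩ := D.map_iota φ X
  obtain ⟨f', hf'⟩ := D.map_iota φ.symm X
  rw [iota_X] at hf hf'
  have h := D.map_iota_eq φ hf f'
  rw [← hf', AlgEquiv.apply_symm_apply, ← iota_X] at h
  have h := congrArg natDegree (D.iota_injective h)
  rw [natDegree_X, natDegree_comp] at h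
  have h1 : f.natDegree = 1 := Nat.eq_one_of_mul_eq_one_left h.symm
  obtain ⟨a, b, rfl⟩ := exists_eq_X_add_C_of_natDegree_le_one h1.le
  have ha : a ≠ 0 := by
    rintro rfl
    simp at h1
  refine ⟨Units.mk0 a ha, b, ?_⟩
  rw [hf, map_add, map_mul, iota_C, iota_C, iota_X, ← Algebra.smul_def]
  rfl

/-! ### Images of `z`, `s`, `t`, `x`, `y` -/

/-- Automorphisms do not send a noncentral monomial into `K[w]`. -/
lemma not_central {N b : D.B} {g h : Exps} (hN : D.IsMon N g) (hb : D.IsMon b h)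
    (hne : D.cocK g h ≠ D.cocK h g) (φ : D.B ≃ₐ[K] D.B) (f : K[X]) : φ N ≠ D.iota f := by
  intro h0
  obtain ⟨f', hf'⟩ := D.map_iota φ.symm f
  rw [← h0, AlgEquiv.symm_apply_apply] at hf'
  apply hne
  have := hN.comm (r := 1) hb (by rw [hf', Units.val_one, one_smul, iota_comm])
  rwa [one_mul] at this

/-- `φ` maps a noncentral normal monomial `N` to a normal monomial of positive degree; `b` witnesses
that `N` is not central. -/
lemma map_nrm {N b : D.B} {g h : Exps} (hNn : D.Nrm N) (hN : D.IsMon N g) (hb : D.IsMon b h)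
    (hne : D.cocK g h ≠ D.cocK h g) (φ : D.B ≃ₐ[K] D.B) :
    ∃ (i k l : ℕ) (c : K[X]), c ≠ 0 ∧ φ N = D.iota c * (D.bz ^ i * (D.bs ^ k * D.bt ^ l)) ∧
      1 ≤ i + k + l := by
  have h0 : φ N ≠ 0 := by
    rw [Ne, EmbeddingLike.map_eq_zero_iff]
    exact hN.ne_zero
  obtain ⟨i, k, l, c, hc, e⟩ := D.nrm_classify h0 (hNn.map φ)
  refine ⟨i, k, l, c, hc, e, ?_⟩
  by_contra hlt
  obtain rfl : i = 0 := by lia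
  obtain rfl : k = 0 := by lia
  obtain rfl : l = 0 := by lia
  exact D.not_central hN hb hne φ c (by simpa using e)

lemma zx_ne : D.cocK (1, 0, 0, 0) (0, 1, 0, 0) ≠ D.cocK (0, 1, 0, 0) (1, 0, 0, 0) := by
  intro h
  have := D.hP 1 (by simpa [cocK] using h.symm)
  lia

lemma st_ne : D.cocK (0, 0, 1, 0) (0, 0, 0, 1) ≠ D.cocK (0, 0, 0, 1) (0, 0, 1, 0) := by
  intro h
  have := D.hQ 1 (by simpa [cocK] using h)
  lia

/-- Automorphisms map noncentral normal monomials of degree one to such monomials: `φ⁻¹` does not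
decrease the degree of `φ N`, because it sends `z`, `s`, `t` to monomials of positive degree. -/
lemma map_deg_one {N b : D.B} {g h : Exps} (hNn : D.Nrm N) (hN : D.IsMon N g) (hb : D.IsMon b h)
    (hne : D.cocK g h ≠ D.cocK h g) (hg : g.1 + g.2.2.1 + g.2.2.2 = 1) (φ : D.B ≃ₐ[K] D.B) :
    ∃ (i k l : ℕ) (c : K[X]), c ≠ 0 ∧ φ N = D.iota c * (D.bz ^ i * (D.bs ^ k * D.bt ^ l)) ∧
      i + k + l = 1 := by
  obtain ⟨i, k, l, c, hc, e, hd⟩ := D.map_nrm hNn hN hb hne φ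
  refine ⟨i, k, l, c, hc, e, ?_⟩
  obtain ⟨i1, k1, l1, c1, hc1, e1, hd1⟩ :=
    D.map_nrm D.nrm_bz D.isMon_bz D.isMon_bx D.zx_ne φ.symm
  obtain ⟨i2, k2, l2, c2, hc2, e2, hd2⟩ :=
    D.map_nrm D.nrm_bs D.isMon_bs D.isMon_bt D.st_ne φ.symm
  obtain ⟨i3, k3, l3, c3, hc3, e3, hd3⟩ :=
    D.map_nrm D.nrm_bt D.isMon_bt D.isMon_bs D.st_ne.symm φ.symm
  obtain ⟨c', hc'⟩ := D.map_iota φ.symm c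
  have hc0 : c' ≠ 0 := by
    rintro rfl
    rw [map_zero, EmbeddingLike.map_eq_zero_iff] at hc'
    exact (D.isMon_iota hc).ne_zero hc'
  have e' := congrArg φ.symm e
  rw [AlgEquiv.symm_apply_apply, map_mul, map_mul, map_mul, map_pow, map_pow, map_pow, hc'] at e'
  have m1 := D.isMon_nm hc1 i1 k1 l1
  have m2 := D.isMon_nm hc2 i2 k2 l2
  have m3 := D.isMon_nm hc3 i3 k3 l3
  rw [← e1] at m1
  rw [← e2] at m2
  rw [← e3] at m3
  have m := (D.isMon_iota hc0).mul ((m1.pow i).mul ((m2.pow k).mul (m3.pow l)))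
  rw [← e'] at m
  have hgg := hN.unique m
  rw [hgg] at hg
  simp at hg
  have key : i * (i1 + k1 + l1) + k * (i2 + k2 + l2) + l * (i3 + k3 + l3) = 1 := by
    zify
    linarith
  have : i + k + l ≤ i * (i1 + k1 + l1) + k * (i2 + k2 + l2) + l * (i3 + k3 + l3) := by
    have a1 := Nat.mul_le_mul_left i hd1
    have a2 := Nat.mul_le_mul_left k hd2
    have a3 := Nat.mul_le_mul_left l hd3
    lia
  lia

/-- `φ` fixes `z`, `s`, `t` up to factors from `K[w]`. -/
lemma map_zst (φ : D.B ≃ₐ[K] D.B) : ∃ c1 c2 c3 : K[X],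
    φ D.bz = D.iota c1 * D.bz ∧ φ D.bs = D.iota c2 * D.bs ∧ φ D.bt = D.iota c3 * D.bt := by
  obtain ⟨i1, k1, l1, c1, hc1, e1, hd1⟩ :=
    D.map_deg_one D.nrm_bz D.isMon_bz D.isMon_bx D.zx_ne (by simp) φ
  obtain ⟨i2, k2, l2, c2, hc2, e2, hd2⟩ :=
    D.map_deg_one D.nrm_bs D.isMon_bs D.isMon_bt D.st_ne (by simp) φ
  obtain ⟨i3, k3, l3, c3, hc3, e3, hd3⟩ :=
    D.map_deg_one D.nrm_bt D.isMon_bt D.isMon_bs D.st_ne.symm (by simp) φ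
  have m1 := D.isMon_nm hc1 i1 k1 l1
  have m2 := D.isMon_nm hc2 i2 k2 l2
  have m3 := D.isMon_nm hc3 i3 k3 l3
  rw [← e1] at m1
  rw [← e2] at m2
  rw [← e3] at m3
  have hst := m2.comm m3 (r := D.Q) (by rw [← map_mul, rel_st, map_smul, map_mul])
  have hsz := m2.comm m1 (r := 1) (by
    rw [← map_mul, ← map_mul, Units.val_one, one_smul]
    congr 1
    apply D.ev_injective
    rw [ev_mul, ev_mul, ev_bs, ev_bz, vs, vz, op_single, op_single]
    simp [cocK])
  have htz := m3.comm m1 (r := 1) (by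
    rw [← map_mul, ← map_mul, Units.val_one, one_smul]
    congr 1
    apply D.ev_injective
    rw [ev_mul, ev_mul, ev_bt, ev_bz, vt, vz, op_single, op_single]
    simp [cocK])
  simp [cocK, -zpow_neg] at hst hsz htz
  have hst := D.Q_inj (hst.trans (zpow_one_add D.Q _).symm)
  have hl1 := D.Q_inj hsz
  have hk1 := D.Q_inj htz
  have hkl : k2 = 1 ∧ l3 = 1 := by
    have hk2 : k2 ≤ 1 := by lia
    have hl3 : l3 ≤ 1 := by lia
    interval_cases k2 <;> interval_cases l3 <;> simp at hst ⊢ <;> nlinarith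
  obtain ⟨rfl, rfl⟩ := hkl
  obtain rfl : i2 = 0 := by lia
  obtain rfl : l2 = 0 := by lia
  obtain rfl : i3 = 0 := by lia
  obtain rfl : k3 = 0 := by lia
  simp at hl1 hk1
  subst hl1
  subst hk1
  obtain rfl : i1 = 1 := by lia
  exact ⟨c1, c2, c3, by simpa using e1, by simpa using e2, by simpa using e3⟩

/-- If both `φ` and `φ⁻¹` multiply the monomial `b` by an element of `K[w]`, then the factor for `φ`
is invertible in `K[w]`, hence a nonzero scalar. -/
lemma map_scalar {b : D.B} {g : Exps} (hb : D.ev b = Finsupp.single g 1) (φ : D.B ≃ₐ[K] D.B)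
    {c c' : K[X]} (h : φ b = D.iota c * b) (h' : φ.symm b = D.iota c' * b) :
    ∃ u : Kˣ, φ b = (u : K) • b := by
  obtain ⟨d, hd⟩ := D.map_iota φ c'
  have e := congrArg D.ev (congrArg φ h')
  rw [AlgEquiv.apply_symm_apply, map_mul, hd, h, ev_iota_mul, ev_iota_mul, hb,
    Finsupp.smul_single, Finsupp.smul_single, smul_eq_mul, smul_eq_mul, mul_one] at e
  have e := Finsupp.single_injective _ e
  obtain ⟨r, ⟨u, rfl⟩, rfl⟩ :=
    Polynomial.isUnit_iff.1 (IsUnit.of_mul_eq_one d (by rw [mul_comm, ← e]))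
  exact ⟨u, by rw [h, smul_eq_iota]⟩

lemma map_zst' (φ : D.B ≃ₐ[K] D.B) : ∃ u1 u2 u3 : Kˣ,
    φ D.bz = (u1 : K) • D.bz ∧ φ D.bs = (u2 : K) • D.bs ∧ φ D.bt = (u3 : K) • D.bt := by
  obtain ⟨c1, c2, c3, h1, h2, h3⟩ := D.map_zst φ
  obtain ⟨c1', c2', c3', h1', h2', h3'⟩ := D.map_zst φ.symm
  obtain ⟨u1, hu1⟩ := D.map_scalar D.ev_bz φ h1 h1'
  obtain ⟨u2, hu2⟩ := D.map_scalar D.ev_bs φ h2 h2'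
  obtain ⟨u3, hu3⟩ := D.map_scalar D.ev_bt φ h3 h3'
  exact ⟨u1, u2, u3, hu1, hu2, hu3⟩

/-- `φ x` is homogeneous of degree one in `x`. -/
lemma map_bx_supp (φ : D.B ≃ₐ[K] D.B) {g : Exps} (hg : D.ev (φ D.bx) g ≠ 0) : g.2.1 = 1 := by
  obtain ⟨u, -, -, hz, -, -⟩ := D.map_zst' φ
  have hxz : D.bx * D.bz = (D.P : K) • (D.bz * D.bx) := by
    apply D.ev_injective
    rw [map_smul, ev_mul, ev_mul, ev_bx, ev_bz, vx, vz, op_single, op_single,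
      smul_eq_C', Finsupp.smul_single]
    simp [cocK]
  have e := congrArg φ hxz
  rw [map_smul, map_mul, map_mul, hz, mul_smul_comm, smul_mul_assoc] at e
  have e := DFunLike.congr_fun (congrArg D.ev e) (g + (1, 0, 0, 0))
  simp only [map_smul, ev_mul, ev_bz, vz, Finsupp.smul_apply] at e
  rw [tw_single_right_apply, add_comm g, tw_single_left_apply, coc_val, coc_val,
    Polynomial.smul_eq_C_mul, Polynomial.smul_eq_C_mul, Polynomial.smul_eq_C_mul] at e
  have e2 : C (D.cocK g (1, 0, 0, 0) : K) = C ((D.P : K) * (D.cocK (1, 0, 0, 0) g : K)) := by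
    apply mul_left_cancel₀ (mul_ne_zero (C_ne_zero.2 u.ne_zero) hg)
    rw [C_mul]
    linear_combination e
  have e3 : D.cocK g (1, 0, 0, 0) = D.P * D.cocK (1, 0, 0, 0) g :=
    Units.ext (by rw [C_injective e2, Units.val_mul])
  simp [cocK] at e3
  exact D.P_inj (e3.trans (zpow_one _).symm)

/-- Elements of `x`-degree one with nonnegative exponents are left divisible by `x`. -/
lemma exists_bx_mul {v : Exps →₀ K[X]}
    (hv : ∀ g, v g ≠ 0 → 0 ≤ g.1 ∧ 0 ≤ g.2.2.1 ∧ 0 ≤ g.2.2.2 ∧ g.2.1 = 1) :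
    ∃ r, D.ev (D.bx * r) = v := by
  rw [← Finsupp.sum_single v]
  refine Finset.sum_induction _ (fun v => ∃ r, D.ev (D.bx * r) = v) ?_ ?_ ?_
  · rintro _ _ ⟨r, rfl⟩ ⟨r', rfl⟩
    exact ⟨r + r', by rw [mul_add, map_add]⟩
  · exact ⟨0, by rw [mul_zero, map_zero]⟩
  · rintro ⟨i, n, k, l⟩ hg
    obtain ⟨h1, h2, h3, h4⟩ := hv _ (Finsupp.mem_support_iff.1 hg)
    simp only at h1 h2 h3 h4
    subst h4
    lift i to ℕ using h1
    lift k to ℕ using h2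
    lift l to ℕ using h3
    generalize v ((i : ℤ), 1, (k : ℤ), (l : ℤ)) = c
    refine ⟨D.iota (c * C ((D.P ^ (-(i : ℤ)) : Kˣ) : K)) *
      (D.bz ^ i * (D.bs ^ k * D.bt ^ l)), ?_⟩
    have := D.ev_mon i 0 k l
    rw [pow_zero, one_mul] at this
    rw [ev_mul, ev_iota_mul, this, Finsupp.smul_single, ev_bx, vx, op_single, smul_eq_mul,
      mul_one, one_mul, mul_assoc, ← C_mul, ← Units.val_mul]
    simp [cocK]

/-- `φ(x) = x r` gives `x = φ⁻¹(x) φ⁻¹(r)`, so `φ⁻¹(x)` is a monomial dividing `x`. -/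
lemma symm_bx (φ : D.B ≃ₐ[K] D.B) : ∃ c : K[X], φ.symm D.bx = D.iota c * D.bx := by
  obtain ⟨r, hr⟩ := D.exists_bx_mul (v := D.ev (φ D.bx)) fun g hg => by
    obtain ⟨h1, h2, h3⟩ := (D.good_ev _).1 g hg
    exact ⟨h1, h2, h3, D.map_bx_supp φ hg⟩
  have e := congrArg D.ev (congrArg φ.symm (D.ev_injective hr))
  rw [AlgEquiv.symm_apply_apply, map_mul, ev_mul, ev_bx] at e
  obtain ⟨g, h, b, d, hg, hh, hgh, hb, hd⟩ :=
    tw_factor D.coc expsLex expsLex_injective one_ne_zero e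
  have hg1 := (D.good_ev (φ.symm D.bx)).1 g (by rw [hg]; simpa using hb)
  have hg2 := D.map_bx_supp φ.symm (g := g) (by rw [hg]; simpa using hb)
  have hh1 := (D.good_ev (φ.symm r)).1 h (by rw [hh]; simpa using hd)
  obtain rfl : g = (0, 1, 0, 0) := by
    obtain ⟨i, n, k, l⟩ := g
    obtain ⟨i', n', k', l'⟩ := h
    simp at hgh hg1 hg2 hh1 ⊢
    lia
  refine ⟨b, D.ev_injective ?_⟩
  rw [hg, ev_iota_mul, ev_bx, vx, Finsupp.smul_single, smul_eq_mul, mul_one]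

lemma map_bx (φ : D.B ≃ₐ[K] D.B) : ∃ u : Kˣ, φ D.bx = (u : K) • D.bx := by
  obtain ⟨c, hc⟩ := D.symm_bx φ
  obtain ⟨c', hc'⟩ := D.symm_bx φ.symm
  exact D.map_scalar D.ev_bx φ hc' hc

/-- If `φ x = u x` then `φ y = u⁻¹ y`. With `φ z = β z` one has `β z = 1 + (p - 1) u φ(y) x`; the
coefficient of `x^(-1)` in `φ y` vanishes at `z = 1`, so `β = 1`. -/
lemma map_by (φ : D.B ≃ₐ[K] D.B) {u : Kˣ} (hu : φ D.bx = (u : K) • D.bx) :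
    φ D.by' = ((u⁻¹ : Kˣ) : K) • D.by' := by
  obtain ⟨β, -, -, hz, -, -⟩ := D.map_zst' φ
  have e := hz
  rw [bz, map_add, map_one, map_smul, map_mul, hu, ← bz, mul_smul_comm] at e
  have hβ : (β : K) = 1 := by
    have e1 := congrArg (sig (0, 0, 0)) (congrArg D.ev e)
    rw [map_add, ev_one, map_smul, map_smul, ev_mul, ev_bx, map_smul, ev_bz, map_add, smul_eq_C',
      smul_eq_C', smul_eq_C', map_smul, map_smul, map_smul, vx, sig_op_single, vz, sig_single,
      sig_single, if_pos rfl, if_pos (show (0 : Exps).2 = (0, 0, 0) from rfl)] at e1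
    have h0 := (D.good_ev (φ D.by')).2 (-1) 0 0 (by norm_num)
    have h0' : sig ((0, 0, 0) - ((0, 1, 0, 0) : Exps).2) (D.ev (φ D.by')) = 0 :=
      h0
    rw [h0'] at e1
    simp at e1
    exact (C_injective (by rw [← e1, C_1])).symm
  rw [hβ, one_smul, bz] at e
  have e2 := congrArg D.ev e
  rw [map_add, map_add, add_right_inj, map_smul D.ev ((D.P : K) - 1) ((u : K) • _),
    map_smul D.ev ((D.P : K) - 1) (D.by' * D.bx)] at e2
  have e3 : D.ev ((u : K) • (φ D.by' * D.bx)) = D.ev (D.by' * D.bx) :=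
    smul_right_injective (Exps →₀ K[X]) D.P_sub_one_ne e2
  have e4 : D.ev ((u : K) • φ D.by') - D.ev D.by' = 0 := by
    by_contra hne
    have hx0 : D.ev D.bx ≠ 0 := D.ev_ne_zero D.isMon_bx.ne_zero
    have h0 := tw_ne_zero D.coc expsLex expsLex_injective hne hx0
    apply h0
    rw [map_sub, LinearMap.sub_apply, ← ev_mul, ← ev_mul, smul_mul_assoc, sub_eq_zero]
    exact e3
  refine Eq.trans ?_ (congrArg (((u⁻¹ : Kˣ) : K) • ·) (D.ev_injective (sub_eq_zero.1 e4)))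
  rw [smul_smul, ← Units.val_mul, inv_mul_cancel, Units.val_one, one_smul]

/-- `φ` restricts to an endomorphism of `A`, since it rescales the generators; the endomorphism is
`φ` followed by evaluation at `w = 0`. -/
lemma exists_restrict (φ : D.B ≃ₐ[K] D.B) : ∃ g : D.A →ₐ[K] D.A, ∀ a, φ (C a) = C (g a) := by
  obtain ⟨u, hx⟩ := D.map_bx φ
  have hy := D.map_by φ hx
  obtain ⟨-, u2, u3, -, hs, ht⟩ := D.map_zst' φ
  let ε : D.B →ₐ[K] D.A := Polynomial.eval₂AlgHom (AlgHom.id K D.A) 0 fun a => by simp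
  have hε : ∀ a, ε (C a) = a := fun a => eval₂_C _ _
  have key : ∀ a : D.A, ∃ a', φ (C a) = C a' := by
    let S : Subalgebra K D.A := (Polynomial.CAlgHom (R := K) (A := D.A)).range.comap
      (φ.toAlgHom.comp Polynomial.CAlgHom)
    intro a
    have : a ∈ S := by
      refine subalgebra_A_eq_top ?_ ?_ ?_ ?_ a
      · exact ⟨_, (smul_C ..).symm.trans hx.symm⟩
      · exact ⟨_, (smul_C ..).symm.trans hy.symm⟩
      · exact ⟨_, (smul_C ..).symm.trans hs.symm⟩
      · exact ⟨_, (smul_C ..).symm.trans ht.symm⟩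
    obtain ⟨a', ha'⟩ := this
    exact ⟨a', ha'.symm⟩
  refine ⟨ε.comp (φ.toAlgHom.comp Polynomial.CAlgHom), fun a => ?_⟩
  obtain ⟨a', ha'⟩ := key a
  change φ (C a) = C (ε (φ (C a)))
  rw [ha', hε]

lemma exists_restrict_equiv (φ : D.B ≃ₐ[K] D.B) :
    ∃ g : D.A ≃ₐ[K] D.A, ∀ a, φ (C a) = C (g a) := by
  obtain ⟨g, hg⟩ := D.exists_restrict φ
  obtain ⟨g', hg'⟩ := D.exists_restrict φ.symm
  refine ⟨AlgEquiv.ofAlgHom g g' (AlgHom.ext fun a => ?_) (AlgHom.ext fun a => ?_), hg⟩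
  · apply C_injective
    simp [← hg, ← hg']
  · apply C_injective
    simp [← hg, ← hg']

end
end WData

/-- Assume neither `p` nor `q` is a root of unity. Then every `K`-algebra
automorphism `φ` of the polynomial extension `A_p(λ, μ, K_q[s,t])[w]` satisfies
`φ(x) = α·x`, `φ(y) = α⁻¹·y`, `φ(s) = β·s`, `φ(t) = γ·t` and `φ(w) = a·w + b` for some
`α, β, γ, a ∈ K^×` and `b ∈ K`; in particular every such automorphism is triangular. -/
theorem extWeyl_polynomial_aut
    (hp : p ≠ 0) (hq : q ≠ 0) (hlam : lam ≠ 0) (hmu : mu ≠ 0)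
    (hpru : ∀ n : ℕ, 0 < n → p ^ n ≠ 1) (hqru : ∀ n : ℕ, 0 < n → q ^ n ≠ 1)
    (φ : Polynomial (ExtWeyl K p q lam mu) ≃ₐ[K] Polynomial (ExtWeyl K p q lam mu)) :
    ∃ (α β γ a : Kˣ) (b : K),
      φ (C (wx K p q lam mu)) = (α : K) • C (wx K p q lam mu) ∧
      φ (C (wy K p q lam mu)) = ((α⁻¹ : Kˣ) : K) • C (wy K p q lam mu) ∧
      φ (C (ws K p q lam mu)) = (β : K) • C (ws K p q lam mu) ∧
      φ (C (wt K p q lam mu)) = (γ : K) • C (wt K p q lam mu) ∧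
      φ (X : Polynomial (ExtWeyl K p q lam mu)) =
        (a : K) • (X : Polynomial (ExtWeyl K p q lam mu)) +
          C (algebraMap K (ExtWeyl K p q lam mu) b) ∧
      -- triangularity: `φ` restricts to a `K`-algebra automorphism of `A`
      ∃ g : ExtWeyl K p q lam mu ≃ₐ[K] ExtWeyl K p q lam mu,
        ∀ u : ExtWeyl K p q lam mu, φ (C u) = C (g u) := by
  have zpow_one_iff : ∀ {r : K} (hr : r ≠ 0), (∀ n : ℕ, 0 < n → r ^ n ≠ 1) →
      ∀ n : ℤ, (Units.mk0 r hr) ^ n = 1 → n = 0 := by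
    intro r hr h n hn
    by_contra hne
    apply h n.natAbs (Int.natAbs_pos.2 hne)
    have h1 : (Units.mk0 r hr) ^ n.natAbs = 1 := by
      rcases Int.natAbs_eq n with h | h <;> rw [h] at hn <;> simpa using hn
    simpa using congrArg Units.val h1
  let D : WData K := ⟨Units.mk0 p hp, Units.mk0 q hq, Units.mk0 lam hlam, Units.mk0 mu hmu,
    zpow_one_iff hp hpru, zpow_one_iff hq hqru⟩
  obtain ⟨α, hx⟩ := D.map_bx φ
  obtain ⟨-, β, γ, -, hs, ht⟩ := D.map_zst' φ
  obtain ⟨a, b, hw⟩ := D.map_X φ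
  refine ⟨α, β, γ, a, b, hx, D.map_by φ hx, hs, ht, hw, D.exists_restrict_equiv φ⟩
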